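/- arXiv:2503.10933 — 3 statements merged into one kernel-verified Lean document; each statement's English description precedes it below -/
import Mathlib

section
/- (Vinogradov Mean Value Theorem, optimal form) Let d ≥ 2 and s ≥ 1 be integers. For every ε > 0 there is a constant C = C(d,s,ε) > 0 such that for every positive integer N, one has J_{d,s}(N) ≤ C · ( N^s + N^{2s − d(d+1)/2} ) · N^ε. -/
/-!
The estimate follows from a sharp decoupling inequality for the moment curve over the `p`-adic
integers, for one fixed prime `p > d`. The strategy is the short proof of decoupling by Guo, Li,
Yung and Zorin-Kranich, in which the smooth local structure of the curve is replaced by congruences.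

**Decoupling.** A finite set of integer frequencies `x_i` with coefficients `c_i` gives a function
`P ↦ ∑ c_i e(P(x_i) / p ^ (k n))` on the finite group of polynomials `P` of degree at most `k`
modulo `p ^ (k n)`. `Dec p k n C` bounds its normalised `L^{k(k+1)}` norm by the `ℓ²` sum of the
norms of its pieces over residue classes modulo `p ^ n`. The aim is `Adm_zero`: the constant is
`O(p ^ (ε n))` for every `ε > 0`. In dimension one this is orthogonality (`Dec_one`), and higher
dimensions follow by induction on `k`. Affine rescaling (`Dec.rescale`) says that frequencies in one
class modulo `p ^ a` decouple with the constant of the scale `n - a`.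

**Bilinear estimates.** `Bil p k l a b n C` is the analogous inequality for a product of a sum over
one class modulo `p ^ a`, with exponent `l (l + 1)`, and a sum over one class modulo `p ^ b`, with
the complementary exponent, the classes being distinct modulo `p`. Two facts drive the argument.

* `Bil_lower`: since `p > k`, there are polynomials of degree at most `k` vanishing to order
  `k - l + 1` at one class while following a prescribed `l`-dimensional phase at the other
  (`exists_flat`, `exists_phase`). Translating by such phases leaves the second sum unchanged, so
  `l`-dimensional decoupling applies to the first. Iterated, it refines `a` up to the critical value
  `a = (k - l + 1) b / l` at a cost of `p ^ (ε a)` (`Bil_raise`).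
* `Bil_holder`: Hölder's inequality bounds the `l`-th bilinear quantity by the `(l - 1)`-th one and
  by the `(k - l)`-th one with the two sums exchanged.

**Induction on scales.** Let `η` be the infimum of the admissible exponents in dimension `k`. If the
bilinear constants at the critical scales are `O(p ^ ((η + ε) n - x_l b))`, then the two facts give
the same with `x_l` replaced by `(k - l) / (k - l + 1) * x_{l-1} + x_{k-l} / l`, where `x_0 = η`
comes from rescaling (`Gain_step`). This recursion raises the sum of the gains `x_1, …, x_{k-1}` by
`η (k - 1) / k` at every step (`sum_gain`), so if `η > 0` some gain becomes as large as desired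
(`exists_gain`). It then outweighs the loss in passing to bilinear estimates at scale `p ^ (-1)`
(`Bil_saving`), from which the exponent `η` is lowered by splitting the sum into pairs of equal and
of distinct classes modulo `p` (`Dec_step`, `Adm_of_Bil`), contradicting the choice of `η`.

**Counting.** For `c_i = 1` and the frequencies `1, …, N` with `p ^ n` comparable to `N`, the square
function is `N` (`sq_interval`), so decoupling bounds the critical moment by `N ^ (tr d + ε)`, where
`tr d = d (d + 1) / 2`. By orthogonality the moment of order `2 s` dominates `J_{d,s}(N)`
(`Jcount_le_avg`). Other values of `s` follow from monotonicity of normalised norms and from the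
trivial bound `N` for the sum.
-/

/-- `J_{d,s}(N; h)`: the number of `2s`-tuples of integers `1 ≤ n_1, …, n_{2s} ≤ N`
(written here as a pair of `s`-tuples) with
`n_1^ν + ⋯ + n_s^ν = n_{s+1}^ν + ⋯ + n_{2s}^ν + h_ν` for all `ν = 1, …, d`. -/
def Jcount (d s N : ℕ) (h : Fin d → ℤ) : ℕ :=
  (((Fintype.piFinset fun _ : Fin s => Finset.Icc 1 N) ×ˢ
      (Fintype.piFinset fun _ : Fin s => Finset.Icc 1 N)).filter
    fun nm => ∀ ν : Fin d,
      (∑ i, (nm.1 i : ℤ) ^ ((ν : ℕ) + 1)) =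
        (∑ i, (nm.2 i : ℤ) ^ ((ν : ℕ) + 1)) + h ν).card

namespace VMVT

/-! ### Averages over finite sets -/

section Averages

variable {G H J : Type*} [Fintype G] [Fintype H]

/-- The mean value of a real function over a finite type. -/
noncomputable def avg (f : G → ℝ) : ℝ := (Fintype.card G : ℝ)⁻¹ * ∑ g, f g

lemma avg_nonneg {f : G → ℝ} (hf : ∀ g, 0 ≤ f g) : 0 ≤ avg f :=
  mul_nonneg (by positivity) (Finset.sum_nonneg fun g _ => hf g)

lemma avg_mono {f f' : G → ℝ} (h : ∀ g, f g ≤ f' g) : avg f ≤ avg f' :=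
  mul_le_mul_of_nonneg_left (Finset.sum_le_sum fun g _ => h g) (by positivity)

lemma avg_mul_left (a : ℝ) (f : G → ℝ) : avg (fun g => a * f g) = a * avg f := by
  simp only [avg, ← Finset.mul_sum]; ring

lemma avg_mul_right (a : ℝ) (f : G → ℝ) : avg (fun g => f g * a) = avg f * a := by
  simp only [avg, ← Finset.sum_mul]; ring

lemma avg_const [Nonempty G] (a : ℝ) : avg (fun _ : G => a) = a := by
  simp [avg]

lemma avg_sum (s : Finset J) (f : J → G → ℝ) :
    avg (fun g => ∑ j ∈ s, f j g) = ∑ j ∈ s, avg (f j) := by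
  simp only [avg, ← Finset.mul_sum]; rw [Finset.sum_comm]

lemma avg_comm (f : G → H → ℝ) :
    avg (fun g => avg (fun h => f g h)) = avg (fun h => avg (fun g => f g h)) := by
  simp only [avg, ← Finset.mul_sum]; rw [Finset.sum_comm]; ring

lemma avg_add_right [AddGroup G] (f : G → ℝ) (a : G) : avg (fun g => f (g + a)) = avg f := by
  unfold avg; congr 1; exact Equiv.sum_comp (Equiv.addRight a) f

/-- Averaging over arbitrary translates `g + T h` does not change the mean; no structure on
`T` is needed. -/
lemma avg_shift [AddGroup G] [Nonempty H] (f : G → ℝ) (T : H → G) :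
    avg (fun g => avg (fun h => f (g + T h))) = avg f := by
  rw [avg_comm]
  simp only [avg_add_right, avg_const]

/-- The normalised `ℓ^t` norm (of a nonnegative function), with a natural exponent. -/
noncomputable def nm (t : ℕ) (f : G → ℝ) : ℝ := (avg fun g => f g ^ t) ^ ((t : ℝ)⁻¹)

lemma nm_nonneg {t : ℕ} {f : G → ℝ} (hf : ∀ g, 0 ≤ f g) : 0 ≤ nm t f :=
  Real.rpow_nonneg (avg_nonneg fun g => pow_nonneg (hf g) t) _

lemma nm_pow {t : ℕ} (ht : t ≠ 0) {f : G → ℝ} (hf : ∀ g, 0 ≤ f g) :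
    nm t f ^ t = avg fun g => f g ^ t :=
  Real.rpow_inv_natCast_pow (avg_nonneg fun g => pow_nonneg (hf g) t) ht

lemma nm_zero {t : ℕ} (ht : t ≠ 0) : nm t (fun _ : G => 0) = 0 := by
  simp [nm, avg, ht]

lemma nm_mono {t : ℕ} {f f' : G → ℝ} (hf : ∀ g, 0 ≤ f g) (h : ∀ g, f g ≤ f' g) :
    nm t f ≤ nm t f' :=
  Real.rpow_le_rpow (avg_nonneg fun g => pow_nonneg (hf g) t)
    (avg_mono fun g => pow_le_pow_left₀ (hf g) (h g) t) (by positivity)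

lemma nm_mul_left {t : ℕ} (ht : t ≠ 0) {a : ℝ} (ha : 0 ≤ a) {f : G → ℝ} (hf : ∀ g, 0 ≤ f g) :
    nm t (fun g => a * f g) = a * nm t f := by
  unfold nm
  simp only [mul_pow, avg_mul_left]
  rw [Real.mul_rpow (by positivity) (avg_nonneg fun g => pow_nonneg (hf g) t),
    Real.pow_rpow_inv_natCast ha ht]

lemma nm_add_le {t : ℕ} (ht : 1 ≤ t) {f f' : G → ℝ} (hf : ∀ g, 0 ≤ f g) (hf' : ∀ g, 0 ≤ f' g) :
    nm t (fun g => f g + f' g) ≤ nm t f + nm t f' := by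
  have h := Real.Lp_add_le_of_nonneg (Finset.univ : Finset G) (p := t) (by exact_mod_cast ht)
    (fun i _ => hf i) (fun i _ => hf' i)
  simp only [Real.rpow_natCast, one_div] at h
  unfold nm avg
  rw [Real.mul_rpow (by positivity) (Finset.sum_nonneg fun g _ => by
      have := hf g; have := hf' g; positivity),
    Real.mul_rpow (by positivity) (Finset.sum_nonneg fun g _ => by have := hf g; positivity),
    Real.mul_rpow (by positivity) (Finset.sum_nonneg fun g _ => by have := hf' g; positivity),
    ← mul_add]
  exact mul_le_mul_of_nonneg_left h (by positivity)

/-- Minkowski's inequality for finite sums. -/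
lemma nm_sum_le {t : ℕ} (ht : 1 ≤ t) (s : Finset J) {f : J → G → ℝ} (hf : ∀ j g, 0 ≤ f j g) :
    nm t (fun g => ∑ j ∈ s, f j g) ≤ ∑ j ∈ s, nm t (f j) := by
  classical
  induction s using Finset.induction_on with
  | empty => simp [nm_zero (G := G) (t := t) (by omega)]
  | insert j s hj ih =>
    simp only [Finset.sum_insert hj]
    exact (nm_add_le ht (hf j) fun g => Finset.sum_nonneg fun j _ => hf j g).trans
      (by gcongr)

/-- Minkowski's inequality, in the form of `avg ((∑ f_j^{1/t})^t) ≤ (∑ (avg f_j)^{1/t})^t`. -/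
lemma avg_rpow_sum_le {t : ℕ} (ht : 1 ≤ t) (s : Finset J) {f : J → G → ℝ}
    (hf : ∀ j g, 0 ≤ f j g) :
    (avg fun g => (∑ j ∈ s, f j g ^ ((t : ℝ)⁻¹)) ^ t) ≤
      (∑ j ∈ s, (avg (f j)) ^ ((t : ℝ)⁻¹)) ^ t := by
  have h0 : t ≠ 0 := by omega
  have hp : ∀ j g, 0 ≤ f j g ^ ((t : ℝ)⁻¹) := fun j g => Real.rpow_nonneg (hf j g) _
  rw [← nm_pow h0 (f := fun g => ∑ j ∈ s, f j g ^ ((t : ℝ)⁻¹))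
    (fun g => Finset.sum_nonneg fun j _ => hp j g)]
  refine pow_le_pow_left₀ (nm_nonneg fun g => Finset.sum_nonneg fun j _ => hp j g) ?_ t
  refine (nm_sum_le ht s hp).trans (le_of_eq (Finset.sum_congr rfl fun j _ => ?_))
  unfold nm
  congr 2
  funext g
  exact Real.rpow_inv_natCast_pow (hf j g) h0

/-- Hölder's inequality for two nonnegative functions. -/
lemma avg_holder [Nonempty G] {u v : G → ℝ} (hu : ∀ g, 0 ≤ u g) (hv : ∀ g, 0 ≤ v g) {θ : ℝ}
    (h0 : 0 ≤ θ) (h1 : θ ≤ 1) :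
    (avg fun g => u g ^ (1 - θ) * v g ^ θ) ≤ avg u ^ (1 - θ) * avg v ^ θ := by
  rcases h0.eq_or_lt with rfl | h0
  · simp
  rcases h1.eq_or_lt with rfl | h1
  · simp
  have hpq : (1 - θ)⁻¹.HolderConjugate θ⁻¹ := by
    rw [Real.holderConjugate_iff]
    refine ⟨(one_lt_inv₀ (by linarith)).2 (by linarith), by simp⟩
  have h := Real.inner_le_Lp_mul_Lq_of_nonneg (Finset.univ : Finset G) hpq
    (f := fun g => u g ^ (1 - θ)) (g := fun g => v g ^ θ)
    (fun i _ => Real.rpow_nonneg (hu i) _) (fun i _ => Real.rpow_nonneg (hv i) _)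
  have e1 : ∀ g, (u g ^ (1 - θ)) ^ (1 - θ)⁻¹ = u g := fun g =>
    Real.rpow_rpow_inv (hu g) (by linarith)
  have e2 : ∀ g, (v g ^ θ) ^ θ⁻¹ = v g := fun g => Real.rpow_rpow_inv (hv g) (by linarith)
  simp only [e1, e2, one_div, inv_inv] at h
  unfold avg
  rw [Real.mul_rpow (by positivity) (Finset.sum_nonneg fun g _ => hu g),
    Real.mul_rpow (by positivity) (Finset.sum_nonneg fun g _ => hv g)]
  have hc : (0:ℝ) < (Fintype.card G : ℝ)⁻¹ := by
    have : 0 < Fintype.card G := Fintype.card_pos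
    positivity
  calc _ ≤ (Fintype.card G : ℝ)⁻¹ * ((∑ g, u g) ^ (1 - θ) * (∑ g, v g) ^ θ) :=
        mul_le_mul_of_nonneg_left h hc.le
    _ = ((Fintype.card G : ℝ)⁻¹ ^ (1 - θ) * (Fintype.card G : ℝ)⁻¹ ^ θ) *
          ((∑ g, u g) ^ (1 - θ) * (∑ g, v g) ^ θ) := by
        rw [← Real.rpow_add hc]; simp
    _ = _ := by ring

/-- Splitting a natural power along a convex combination of exponents. -/
lemma pow_interp {F : ℝ} (hF : 0 ≤ F) {m a b : ℕ} {θ : ℝ} (h0 : 0 ≤ θ) (h1 : θ ≤ 1)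
    (h : (m : ℝ) = (1 - θ) * a + θ * b) : F ^ m = (F ^ a) ^ (1 - θ) * (F ^ b) ^ θ := by
  rw [← Real.rpow_natCast F a, ← Real.rpow_natCast F b, ← Real.rpow_mul hF, ← Real.rpow_mul hF,
    ← Real.rpow_add_of_nonneg hF (mul_nonneg (by positivity) (by linarith)) (by positivity),
    ← Real.rpow_natCast F m, h]
  congr 1; ring

lemma avg_pow_holder [Nonempty G] {F F' : G → ℝ} (hF : ∀ g, 0 ≤ F g) (hF' : ∀ g, 0 ≤ F' g)
    {m a b m' a' b' : ℕ} {θ : ℝ} (h0 : 0 ≤ θ) (h1 : θ ≤ 1)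
    (h : (m : ℝ) = (1 - θ) * a + θ * b) (h' : (m' : ℝ) = (1 - θ) * a' + θ * b') :
    (avg fun g => F g ^ m * F' g ^ m') ≤
      (avg fun g => F g ^ a * F' g ^ a') ^ (1 - θ) * (avg fun g => F g ^ b * F' g ^ b') ^ θ := by
  have hn : ∀ (a a' : ℕ) g, 0 ≤ F g ^ a * F' g ^ a' := fun a a' g =>
    mul_nonneg (pow_nonneg (hF g) _) (pow_nonneg (hF' g) _)
  refine le_trans (le_of_eq ?_) (avg_holder (hn a a') (hn b b') h0 h1)
  congr 1
  funext g
  rw [pow_interp (hF g) h0 h1 h, pow_interp (hF' g) h0 h1 h',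
    Real.mul_rpow (pow_nonneg (hF g) _) (pow_nonneg (hF' g) _),
    Real.mul_rpow (pow_nonneg (hF g) _) (pow_nonneg (hF' g) _)]
  ring

lemma avg_pow_le [Nonempty G] {F : G → ℝ} (hF : ∀ g, 0 ≤ F g) {s t : ℕ} (ht : 1 ≤ t)
    (hst : s ≤ t) : (avg fun g => F g ^ s) ≤ (avg fun g => F g ^ t) ^ ((s : ℝ) / t) := by
  have ht' : (0:ℝ) < t := by exact_mod_cast ht
  have h := avg_pow_holder (G := G) hF (fun _ => zero_le_one) (m := s) (a := 0) (b := t)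
    (m' := 0) (a' := 0) (b' := 0) (θ := (s : ℝ) / t) (by positivity)
    (div_le_one_of_le₀ (by exact_mod_cast hst) ht'.le) (by field_simp; simp) (by simp)
  simpa [avg_const] using h

end Averages

/-! ### Exponential sums along the moment curve -/

section Sums

variable (p : ℕ) [hp : Fact p.Prime]

/-- The triangular number `k (k + 1) / 2`, half of the critical exponent in dimension `k`. -/
def tr : ℕ → ℕ
  | 0 => 0
  | k + 1 => tr k + (k + 1)

lemma two_mul_tr (k : ℕ) : 2 * tr k = k * (k + 1) := by
  induction k with
  | zero => rfl
  | succ k ih => rw [tr]; linarith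

lemma tr_mono {l k : ℕ} (h : l ≤ k) : tr l ≤ tr k := by
  have h1 := two_mul_tr l
  have h2 := two_mul_tr k
  have : l * (l + 1) ≤ k * (k + 1) := by gcongr
  omega

lemma one_le_tr {k : ℕ} (h : 1 ≤ k) : 1 ≤ tr k := tr_mono (l := 1) h

lemma tr_ne_zero {k : ℕ} (h : 1 ≤ k) : tr k ≠ 0 := by have := one_le_tr h; omega

lemma tr_cast (k : ℕ) : (tr k : ℝ) = k * (k + 1) / 2 := by
  have h : ((2 * tr k : ℕ) : ℝ) = ((k * (k + 1) : ℕ) : ℝ) := by rw [two_mul_tr]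
  push_cast at h
  linarith

/-- The physical space: polynomials of degree at most `k` over `ℤ / p ^ M`, given by their
coefficients. The constant coefficient only rotates exponential sums; keeping it makes the
space stable under translations of the variable. -/
abbrev Ph (k M : ℕ) : Type := Fin (k + 1) → ZMod (p ^ M)

variable {p} in
/-- The phase `e(P(x) / p ^ M)`. -/
noncomputable def ph {k M : ℕ} (P : Ph p k M) (x : ℤ) : ℂ :=
  ZMod.stdAddChar (∑ j, P j * (x : ZMod (p ^ M)) ^ (j : ℕ))

variable {p} in
lemma ph_add {k M : ℕ} (P R : Ph p k M) (x : ℤ) : ph (P + R) x = ph P x * ph R x := by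
  simp only [ph, Pi.add_apply, add_mul, Finset.sum_add_distrib, AddChar.map_add_eq_mul]

lemma norm_std {N : ℕ} [NeZero N] (a : ZMod N) : ‖ZMod.stdAddChar a‖ = 1 :=
  AddChar.norm_apply _ a

variable {p} in
lemma norm_ph {k M : ℕ} (P : Ph p k M) (x : ℤ) : ‖ph P x‖ = 1 := norm_std _

variable {p} in
/-- The exponential sum `∑_{i ∈ S} c_i e(P(x_i) / p ^ M)`. -/
noncomputable def es {k M : ℕ} (S : Finset ℕ) (x : ℕ → ℤ) (c : ℕ → ℂ) (P : Ph p k M) : ℂ :=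
  ∑ i ∈ S, c i * ph P (x i)

variable {p} in
/-- The squared absolute value of an exponential sum. -/
noncomputable def en {k M : ℕ} (S : Finset ℕ) (x : ℕ → ℤ) (c : ℕ → ℂ) (P : Ph p k M) : ℝ :=
  ‖es S x c P‖ ^ 2

variable {p} in
lemma en_nonneg {k M : ℕ} (S : Finset ℕ) (x : ℕ → ℤ) (c : ℕ → ℂ) (P : Ph p k M) :
    0 ≤ en S x c P := by unfold en; positivity

variable {p} in
lemma en_empty {k M : ℕ} (x : ℕ → ℤ) (c : ℕ → ℂ) (P : Ph p k M) : en ∅ x c P = 0 := by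
  simp [en, es]

/-- The part of `S` whose frequencies lie in the residue class `j` modulo `p ^ n`. -/
abbrev cl (n : ℕ) (S : Finset ℕ) (x : ℕ → ℤ) (j : ZMod (p ^ n)) : Finset ℕ :=
  S.filter fun i => (x i : ZMod (p ^ n)) = j

/-- The normalised square of the `L^{k(k+1)}` norm of an exponential sum. -/
noncomputable def Nm (k M : ℕ) (S : Finset ℕ) (x : ℕ → ℤ) (c : ℕ → ℂ) : ℝ :=
  nm (tr k) fun P : Ph p k M => en S x c P

/-- The square function side of `ℓ²` decoupling: the sum over residue classes modulo `p ^ n` of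
the squared `L^{k(k+1)}` norms. -/
noncomputable def sq (k n : ℕ) (S : Finset ℕ) (x : ℕ → ℤ) (c : ℕ → ℂ) : ℝ :=
  ∑ j : ZMod (p ^ n), Nm p k (k * n) (cl p n S x j) x c

/-- `Dec p k n C`: the `p`-adic `ℓ² L^{k(k+1)}` decoupling inequality for the moment curve in
dimension `k` down to scale `p ^ (-n)` holds with constant `C`; both sides are raised to the
power `k(k+1)`. -/
def Dec (k n : ℕ) (C : ℝ) : Prop :=
  ∀ (S : Finset ℕ) (x : ℕ → ℤ) (c : ℕ → ℂ),
    (avg fun P : Ph p k (k * n) => en S x c P ^ tr k) ≤ C * sq p k n S x c ^ tr k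

lemma Nm_nonneg (k M : ℕ) (S : Finset ℕ) (x : ℕ → ℤ) (c : ℕ → ℂ) : 0 ≤ Nm p k M S x c :=
  nm_nonneg fun P => en_nonneg S x c P

lemma Nm_empty {k : ℕ} (hk : 1 ≤ k) (M : ℕ) (x : ℕ → ℤ) (c : ℕ → ℂ) : Nm p k M ∅ x c = 0 := by
  unfold Nm
  simp only [en_empty]
  exact nm_zero (tr_ne_zero hk)

lemma sq_nonneg' (k n : ℕ) (S : Finset ℕ) (x : ℕ → ℤ) (c : ℕ → ℂ) : 0 ≤ sq p k n S x c :=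
  Finset.sum_nonneg fun _ _ => Nm_nonneg p k _ _ x c

lemma Dec.mono {k n : ℕ} {C C' : ℝ} (h : Dec p k n C) (hC : C ≤ C') : Dec p k n C' :=
  fun S x c => (h S x c).trans
    (mul_le_mul_of_nonneg_right hC (pow_nonneg (sq_nonneg' p k n S x c) _))

/-- Transference of decoupling along a map `T` of physical spaces. If adding `T Q` to the phase
acts on the frequencies `x_i` as the phase `Q` at the points `t_i`, up to a unimodular constant,
then `l`-dimensional decoupling for the `t_i` holds for the original sum, with any weight `g`
invariant under translations by `T Q`. -/
lemma transfer {l μ k M : ℕ} {C : ℝ} (hl : 1 ≤ l) (hD : Dec p l μ C) (hC : 0 ≤ C)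
    (S : Finset ℕ) (x : ℕ → ℤ) (c : ℕ → ℂ) (t : ℕ → ℤ)
    (T : Ph p l (l * μ) → Ph p k M) (κ : Ph p l (l * μ) → ℂ) (hκ : ∀ Q, ‖κ Q‖ = 1)
    (hT : ∀ Q, ∀ i ∈ S, ph (T Q) (x i) = κ Q * ph Q (t i))
    (g : Ph p k M → ℝ) (hg0 : ∀ P, 0 ≤ g P) (hg : ∀ P Q, g (P + T Q) = g P) :
    (avg fun P => en S x c P ^ tr l * g P) ≤
      C * (∑ j : ZMod (p ^ μ),
        (avg fun P => en (cl p μ S t j) x c P ^ tr l * g P) ^ ((tr l : ℝ)⁻¹)) ^ tr l := by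
  have ht := one_le_tr hl
  have ht0 := tr_ne_zero hl
  have key : ∀ S' ⊆ S, ∀ (P : Ph p k M) (Q : Ph p l (l * μ)),
      en (p := p) S' x c (P + T Q) = en (p := p) S' t (fun i => c i * ph P (x i)) Q := by
    intro S' hS' P Q
    unfold en es
    have : ∑ i ∈ S', c i * ph (P + T Q) (x i) =
        κ Q * ∑ i ∈ S', c i * ph P (x i) * ph Q (t i) := by
      rw [Finset.mul_sum]
      refine Finset.sum_congr rfl fun i hi => ?_
      rw [ph_add, hT Q i (hS' hi)]
      ring
    rw [this, norm_mul, hκ, one_mul]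
  have step : ∀ S' ⊆ S, (avg fun P => en S' x c P ^ tr l * g P) =
      avg fun P => g P *
        avg fun Q : Ph p l (l * μ) => en S' t (fun i => c i * ph P (x i)) Q ^ tr l := by
    intro S' hS'
    rw [← avg_shift (fun P => en S' x c P ^ tr l * g P) T]
    congr 1
    funext P
    rw [← avg_mul_left]
    congr 1
    funext Q
    rw [key S' hS', hg, mul_comm]
  rw [step S subset_rfl]
  have hsub : ∀ j : ZMod (p ^ μ), cl p μ S t j ⊆ S := fun j => Finset.filter_subset _ _
  have hnn : ∀ (j : ZMod (p ^ μ)) P, 0 ≤ g P * avg fun Q : Ph p l (l * μ) =>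
      en (cl p μ S t j) t (fun i => c i * ph P (x i)) Q ^ tr l := fun j P =>
    mul_nonneg (hg0 P) (avg_nonneg fun Q => pow_nonneg (en_nonneg _ _ _ _) _)
  calc _ ≤ avg fun P => C * (∑ j : ZMod (p ^ μ), (g P * avg fun Q : Ph p l (l * μ) =>
        en (cl p μ S t j) t (fun i => c i * ph P (x i)) Q ^ tr l) ^ ((tr l : ℝ)⁻¹)) ^ tr l := by
        refine avg_mono fun P => ?_
        refine (mul_le_mul_of_nonneg_left (hD S t fun i => c i * ph P (x i)) (hg0 P)).trans
          (le_of_eq ?_)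
        have : ∀ j : ZMod (p ^ μ), (g P * avg fun Q : Ph p l (l * μ) =>
            en (cl p μ S t j) t (fun i => c i * ph P (x i)) Q ^ tr l) ^ ((tr l : ℝ)⁻¹) =
            g P ^ ((tr l : ℝ)⁻¹) *
              Nm p l (l * μ) (cl p μ S t j) t (fun i => c i * ph P (x i)) := fun j =>
          Real.mul_rpow (hg0 P) (avg_nonneg fun Q => pow_nonneg (en_nonneg _ _ _ _) _)
        simp only [this, ← Finset.mul_sum]
        rw [mul_pow, Real.rpow_inv_natCast_pow (hg0 P) ht0]
        unfold sq
        ring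
    _ ≤ C * (∑ j : ZMod (p ^ μ), (avg fun P => g P * avg fun Q : Ph p l (l * μ) =>
        en (cl p μ S t j) t (fun i => c i * ph P (x i)) Q ^ tr l) ^ ((tr l : ℝ)⁻¹)) ^ tr l := by
        rw [avg_mul_left]
        exact mul_le_mul_of_nonneg_left (avg_rpow_sum_le ht Finset.univ hnn) hC
    _ = _ := by
        congr 2
        exact Finset.sum_congr rfl fun j _ => by rw [step _ (hsub j)]

end Sums

/-! ### Refining partitions, trivial bounds and rescaling -/

section Basic

set_option linter.unusedSectionVars false

variable (p : ℕ) [hp : Fact p.Prime]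

lemma sum_Nm_refine {A B : Type*} [Fintype A] [DecidableEq A] [Fintype B] [DecidableEq B]
    {k : ℕ} (hk : 1 ≤ k) (M : ℕ) (S : Finset ℕ) (x : ℕ → ℤ) (c : ℕ → ℂ) (u : ℕ → A) (v : ℕ → B)
    (h : ∀ i ∈ S, ∀ i' ∈ S, u i = u i' → v i = v i') :
    ∑ b, ∑ a, Nm p k M ((S.filter fun i => v i = b).filter fun i => u i = a) x c =
      ∑ a, Nm p k M (S.filter fun i => u i = a) x c := by
  rw [Finset.sum_comm]
  refine Finset.sum_congr rfl fun a _ => ?_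
  rcases (S.filter fun i => u i = a).eq_empty_or_nonempty with he | ⟨i, hi⟩
  · rw [he, Nm_empty p hk]
    refine Finset.sum_eq_zero fun b _ => ?_
    rw [Finset.filter_comm, he, Finset.filter_empty, Nm_empty p hk]
  · rw [Finset.mem_filter] at hi
    rw [Finset.sum_eq_single (v i)]
    · congr 1
      rw [Finset.filter_filter]
      refine Finset.filter_congr fun i' hi' => ⟨fun h => h.2, fun h' => ⟨?_, h'⟩⟩
      exact h i' hi' i hi.1 (h'.trans hi.2.symm)
    · intro b _ hb
      rw [Finset.filter_filter, Finset.filter_false_of_mem, Nm_empty p hk]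
      rintro i' hi' ⟨h1, h2⟩
      exact hb (h1.symm.trans (h i' hi' i hi.1 (h2.trans hi.2.symm)))
    · simp

/-- The square function is additive over partitions coarser than the finest scale. -/
lemma sum_sq_filter {B : Type*} [Fintype B] [DecidableEq B]
    {k : ℕ} (hk : 1 ≤ k) (n : ℕ) (S : Finset ℕ) (x : ℕ → ℤ) (c : ℕ → ℂ) (v : ℕ → B)
    (h : ∀ i ∈ S, ∀ i' ∈ S, (x i : ZMod (p ^ n)) = x i' → v i = v i') :
    ∑ b, sq p k n (S.filter fun i => v i = b) x c = sq p k n S x c :=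
  sum_Nm_refine p hk (k * n) S x c (fun i => (x i : ZMod (p ^ n))) v h

lemma sum_Nm_congr {A B : Type*} [Fintype A] [DecidableEq A] [Fintype B] [DecidableEq B]
    {k : ℕ} (hk : 1 ≤ k) (M : ℕ) (S : Finset ℕ) (x : ℕ → ℤ) (c : ℕ → ℂ) (u : ℕ → A) (v : ℕ → B)
    (h : ∀ i ∈ S, ∀ i' ∈ S, u i = u i' ↔ v i = v i') :
    ∑ a, Nm p k M (S.filter fun i => u i = a) x c =
      ∑ b, Nm p k M (S.filter fun i => v i = b) x c := by
  rw [← sum_Nm_refine p hk M S x c u v fun i hi i' hi' => (h i hi i' hi').1,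
    ← sum_Nm_refine p hk M S x c v u fun i hi i' hi' => (h i hi i' hi').2, Finset.sum_comm]
  simp only [Finset.filter_comm (fun i => v i = _)]

lemma sq_mono_filter {k : ℕ} (hk : 1 ≤ k) (n : ℕ) (S : Finset ℕ) (x : ℕ → ℤ) (c : ℕ → ℂ) {a : ℕ}
    (ha : a ≤ n) (r : ZMod (p ^ a)) : sq p k n (cl p a S x r) x c ≤ sq p k n S x c := by
  rw [← sum_sq_filter p hk n S x c (fun i => (x i : ZMod (p ^ a))) ?_]
  · exact Finset.single_le_sum (f := fun r => sq p k n (cl p a S x r) x c)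
      (fun r _ => sq_nonneg' p k n _ x c) (Finset.mem_univ r)
  · intro i _ i' _ h
    rw [ZMod.intCast_eq_intCast_iff_dvd_sub] at h ⊢
    refine dvd_trans ?_ h
    exact_mod_cast pow_dvd_pow p ha

lemma es_eq_sum_cl {k M : ℕ} (n : ℕ) (S : Finset ℕ) (x : ℕ → ℤ) (c : ℕ → ℂ) (P : Ph p k M) :
    es S x c P = ∑ j : ZMod (p ^ n), es (cl p n S x j) x c P := by
  unfold es
  exact (Finset.sum_fiberwise S (fun i => (x i : ZMod (p ^ n))) _).symm

lemma en_le_sum {k M : ℕ} (n : ℕ) (S : Finset ℕ) (x : ℕ → ℤ) (c : ℕ → ℂ) (P : Ph p k M) :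
    en S x c P ≤ (p : ℝ) ^ n * ∑ j : ZMod (p ^ n), en (cl p n S x j) x c P := by
  unfold en
  rw [es_eq_sum_cl p n]
  calc _ ≤ (∑ j : ZMod (p ^ n), ‖es (cl p n S x j) x c P‖) ^ 2 := by
        gcongr; exact norm_sum_le _ _
    _ ≤ _ := by
        have := sq_sum_le_card_mul_sum_sq (s := (Finset.univ : Finset (ZMod (p ^ n))))
          (f := fun j => ‖es (cl p n S x j) x c P‖)
        simpa [ZMod.card] using this

lemma Dec_trivial {k : ℕ} (hk : 1 ≤ k) (n : ℕ) : Dec p k n (((p : ℝ) ^ n) ^ tr k) := by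
  intro S x c
  have ht := one_le_tr hk
  have ht0 := tr_ne_zero hk
  rw [← nm_pow ht0 fun P => en_nonneg S x c P, ← mul_pow]
  refine pow_le_pow_left₀ (nm_nonneg fun P => en_nonneg S x c P) ?_ _
  have hs : ∀ P : Ph p k (k * n), 0 ≤ ∑ j : ZMod (p ^ n), en (cl p n S x j) x c P := fun P =>
    Finset.sum_nonneg fun j _ => en_nonneg _ x c P
  refine (nm_mono (fun P => en_nonneg S x c P) fun P => en_le_sum p n S x c P).trans ?_
  rw [nm_mul_left ht0 (by positivity) hs]
  refine mul_le_mul_of_nonneg_left ?_ (by positivity)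
  exact nm_sum_le ht Finset.univ fun j P => en_nonneg (cl p n S x j) x c P

lemma std_sum {N : ℕ} [NeZero N] {J : Type*} (s : Finset J) (f : J → ZMod N) :
    (ZMod.stdAddChar (∑ j ∈ s, f j) : ℂ) = ∏ j ∈ s, ZMod.stdAddChar (f j) := by
  classical
  induction s using Finset.induction_on with
  | empty => simp
  | insert j s hj ih => rw [Finset.sum_insert hj, Finset.prod_insert hj, AddChar.map_add_eq_mul, ih]

/-- Orthogonality of characters on the physical space. -/
lemma sum_std_eq {k M : ℕ} (v : Fin (k + 1) → ZMod (p ^ M)) :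
    ∑ P : Ph p k M, (ZMod.stdAddChar (∑ j, P j * v j) : ℂ) =
      if v = 0 then (Fintype.card (Ph p k M) : ℂ) else 0 := by
  simp only [std_sum]
  rw [← Fintype.piFinset_univ (α := Fin (k + 1)) (β := fun _ => ZMod (p ^ M)),
    ← Finset.prod_univ_sum (fun _ => Finset.univ)
      (fun (i : Fin (k + 1)) (a : ZMod (p ^ M)) => (ZMod.stdAddChar (a * v i) : ℂ))]
  simp only [AddChar.sum_mulShift _ (ZMod.isPrimitive_stdAddChar (p ^ M))]
  split_ifs with h
  · subst h
    simp
  · obtain ⟨i, hi⟩ := Function.ne_iff.1 h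
    exact Finset.prod_eq_zero (Finset.mem_univ i) (by simp at hi; simp [hi])

lemma sum_ph_mul_conj {k M : ℕ} (x y : ℤ) (hk : 1 ≤ k) (h : (x : ZMod (p ^ M)) ≠ y) :
    ∑ P : Ph p k M, ph P x * (starRingEnd ℂ) (ph P y) = 0 := by
  have e : ∀ P : Ph p k M, ph P x * (starRingEnd ℂ) (ph P y) =
      ZMod.stdAddChar
        (∑ j, P j * ((x : ZMod (p ^ M)) ^ (j : ℕ) - (y : ZMod (p ^ M)) ^ (j : ℕ))) := by
    intro P
    unfold ph
    rw [← AddChar.map_neg_eq_conj, ← AddChar.map_add_eq_mul]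
    congr 1
    simp only [mul_sub, Finset.sum_sub_distrib]
    ring
  simp only [e]
  rw [sum_std_eq, if_neg]
  intro h0
  have := congrFun h0 ⟨1, by omega⟩
  simp only [pow_one, Pi.zero_apply] at this
  exact h (sub_eq_zero.1 this)

/-- One-dimensional decoupling is orthogonality. -/
lemma Dec_one (n : ℕ) : Dec p 1 n 1 := by
  intro S x c
  have e1 : ∀ S' : Finset ℕ, nm 1 (fun P : Ph p 1 (1 * n) => en S' x c P) =
      avg fun P : Ph p 1 (1 * n) => en S' x c P := by
    intro S'; simp [nm]
  simp only [show tr 1 = 1 from rfl, pow_one, one_mul, sq, Nm, e1]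
  rw [← avg_sum]
  unfold avg
  refine le_of_eq (congrArg _ ?_)
  have e2 : ∀ z : ℂ, ((‖z‖ ^ 2 : ℝ) : ℂ) = z * (starRingEnd ℂ) z := fun z => by
    rw [Complex.mul_conj, Complex.normSq_eq_norm_sq]
  have hx : ∀ j j' : ZMod (p ^ n), j ≠ j' →
      ∑ P : Ph p 1 (1 * n), es (cl p n S x j) x c P *
        (starRingEnd ℂ) (es (cl p n S x j') x c P) = 0 := by
    intro j j' hj
    unfold es
    simp only [map_sum, map_mul, Finset.sum_mul_sum]
    rw [Finset.sum_comm]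
    refine Finset.sum_eq_zero fun i hi => ?_
    rw [Finset.sum_comm]
    refine Finset.sum_eq_zero fun i' hi' => ?_
    have h := sum_ph_mul_conj p (k := 1) (M := 1 * n) (x i) (x i') le_rfl (by
      rw [Finset.mem_filter] at hi hi'
      intro h
      apply hj
      rw [← hi.2, ← hi'.2]
      rw [ZMod.intCast_eq_intCast_iff_dvd_sub] at h ⊢
      simpa using h)
    calc _ = c i * (starRingEnd ℂ) (c i') *
          ∑ P : Ph p 1 (1 * n), ph P (x i) * (starRingEnd ℂ) (ph P (x i')) := by
          rw [Finset.mul_sum]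
          exact Finset.sum_congr rfl fun P _ => by ring
      _ = 0 := by rw [h, mul_zero]
  have : ((∑ P : Ph p 1 (1 * n), en S x c P : ℝ) : ℂ) =
      ((∑ P : Ph p 1 (1 * n), ∑ j, en (cl p n S x j) x c P : ℝ) : ℂ) := by
    unfold en
    push_cast
    simp only [← Complex.ofReal_pow, e2]
    rw [Finset.sum_comm]
    simp only [es_eq_sum_cl p n S x c, map_sum, Finset.sum_mul_sum]
    rw [Finset.sum_comm]
    refine Finset.sum_congr rfl fun j _ => ?_
    rw [Finset.sum_comm, Finset.sum_eq_single j]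
    · intro j' _ hj'
      exact hx j j' hj'.symm
    · simp
  exact_mod_cast this

/-! ### Phases given by polynomials -/

open Polynomial in
variable {p} in
/-- The point of physical space given by a polynomial (truncated at degree `k`). -/
def toPh {M : ℕ} (k : ℕ) (R : (ZMod (p ^ M))[X]) : Ph p k M := fun j => R.coeff j

open Polynomial in
lemma ph_toPh {M k : ℕ} (R : (ZMod (p ^ M))[X]) (hR : R.natDegree ≤ k) (x : ℤ) :
    ph (toPh k R) x = ZMod.stdAddChar (R.eval (x : ZMod (p ^ M))) := by
  rw [ph, eval_eq_sum_range' (Nat.lt_succ_of_le hR),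
    ← Fin.sum_univ_eq_sum_range (fun i => R.coeff i * (x : ZMod (p ^ M)) ^ i)]
  rfl

lemma std_reduce {M M' : ℕ} (h : M' ≤ M) (z : ℤ) :
    ZMod.stdAddChar ((p : ZMod (p ^ M)) ^ (M - M') * (z : ZMod (p ^ M))) =
      ZMod.stdAddChar (z : ZMod (p ^ M')) := by
  have : (p : ZMod (p ^ M)) ^ (M - M') * (z : ZMod (p ^ M)) =
      (((p : ℤ) ^ (M - M') * z : ℤ) : ZMod (p ^ M)) := by push_cast; rfl
  rw [this, ZMod.stdAddChar_coe, ZMod.stdAddChar_coe]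
  congr 1
  have hp0 : (p : ℂ) ≠ 0 := by exact_mod_cast hp.out.ne_zero
  obtain ⟨e, rfl⟩ := Nat.exists_eq_add_of_le h
  push_cast
  rw [Nat.add_sub_cancel_left, pow_add]
  field_simp

/-- The integer polynomial lifting `Q`, evaluated at `t`. -/
def liftZ {l M : ℕ} (Q : Ph p l M) (t : ℤ) : ℤ := ∑ j, ((Q j).val : ℤ) * t ^ (j : ℕ)

lemma ph_eq_lift {l M : ℕ} (Q : Ph p l M) (t : ℤ) :
    ph Q t = ZMod.stdAddChar (liftZ p Q t : ZMod (p ^ M)) := by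
  simp [ph, liftZ]

open Polynomial in
/-- The polynomial `p ^ (l a) Q((X - r) / p ^ a)` modulo `p ^ M`, for a phase `Q` of degree at
most `l`. -/
noncomputable def resc {l M' : ℕ} (M a : ℕ) (r : ℤ) (Q : Ph p l M') : (ZMod (p ^ M))[X] :=
  ∑ j, C (((Q j).val : ZMod (p ^ M)) * (p : ZMod (p ^ M)) ^ ((l - (j : ℕ)) * a)) *
    (X - C (r : ZMod (p ^ M))) ^ (j : ℕ)

open Polynomial in
lemma resc_natDegree {l M' : ℕ} (M a : ℕ) (r : ℤ) (Q : Ph p l M') :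
    (resc p M a r Q).natDegree ≤ l := by
  unfold resc
  refine natDegree_sum_le_of_forall_le _ _ fun j _ => ?_
  refine (natDegree_C_mul_le _ _).trans ?_
  refine natDegree_pow_le.trans ?_
  have h1 : (X - C (r : ZMod (p ^ M))).natDegree ≤ 1 := natDegree_X_sub_C_le _
  have h2 : (j : ℕ) ≤ l := by omega
  nlinarith

lemma resc_eval {l M' : ℕ} (M a : ℕ) (r t : ℤ) (Q : Ph p l M') :
    (resc p M a r Q).eval ((r + p ^ a * t : ℤ) : ZMod (p ^ M)) =
      (p : ZMod (p ^ M)) ^ (l * a) * (liftZ p Q t : ZMod (p ^ M)) := by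
  unfold resc liftZ
  simp only [Polynomial.eval_finsetSum, Polynomial.eval_mul, Polynomial.eval_C,
    Polynomial.eval_pow, Polynomial.eval_sub, Polynomial.eval_X]
  push_cast
  rw [Finset.mul_sum]
  refine Finset.sum_congr rfl fun j _ => ?_
  have h2 : l * a = (l - (j : ℕ)) * a + a * j := by
    rw [mul_comm a, ← add_mul, Nat.sub_add_cancel (by omega)]
  rw [h2, pow_add, pow_mul]
  ring

lemma eq_add_mul_ediv {x r : ℤ} {a : ℕ} (h : (p : ℤ) ^ a ∣ x - r) :
    x = r + p ^ a * ((x - r) / p ^ a) := by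
  rw [Int.mul_ediv_cancel' h]; ring

/-- Residues of `(x - r) / p ^ a` modulo `p ^ μ` are residues of `x` modulo `p ^ (a + μ)`. -/
lemma resc_class {x x' r : ℤ} {a μ : ℕ} (h : (p : ℤ) ^ a ∣ x - r) (h' : (p : ℤ) ^ a ∣ x' - r) :
    (((x - r) / p ^ a : ℤ) : ZMod (p ^ μ)) = (((x' - r) / p ^ a : ℤ) : ZMod (p ^ μ)) ↔
      (x : ZMod (p ^ (a + μ))) = (x' : ZMod (p ^ (a + μ))) := by
  have hp0 : (p : ℤ) ^ a ≠ 0 := pow_ne_zero _ (by exact_mod_cast hp.out.ne_zero)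
  rw [ZMod.intCast_eq_intCast_iff_dvd_sub, ZMod.intCast_eq_intCast_iff_dvd_sub]
  obtain ⟨y, hy⟩ := h
  obtain ⟨y', hy'⟩ := h'
  rw [hy, hy', Int.mul_ediv_cancel_left _ hp0, Int.mul_ediv_cancel_left _ hp0]
  have : x' - x = p ^ a * (y' - y) := by linarith
  rw [this]
  push_cast
  rw [pow_add, mul_dvd_mul_iff_left hp0]

/-- Parabolic rescaling: for frequencies in one residue class modulo `p ^ a`, decoupling holds
with the constant of the coarser scale `n - a`. -/
lemma Dec.rescale {k n a : ℕ} (hk : 1 ≤ k) (han : a ≤ n) {C : ℝ} (hC : 0 ≤ C)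
    (hD : Dec p k (n - a) C) (S : Finset ℕ) (x : ℕ → ℤ) (c : ℕ → ℂ) (r : ℤ)
    (hS : ∀ i ∈ S, (p : ℤ) ^ a ∣ x i - r) :
    (avg fun P : Ph p k (k * n) => en S x c P ^ tr k) ≤ C * sq p k n S x c ^ tr k := by
  have hM : k * (n - a) ≤ k * n := Nat.mul_le_mul_left _ (Nat.sub_le _ _)
  have hM' : k * n - k * (n - a) = k * a := by
    rw [← Nat.mul_sub, Nat.sub_sub_self han]
  have h := transfer p hk hD hC S x c (fun i => (x i - r) / p ^ a)
    (T := fun Q => toPh k (resc p (k * n) a r Q)) (κ := fun _ => 1) (by simp)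
    (by
      intro Q i hi
      rw [ph_toPh p _ (resc_natDegree p _ a r Q), ph_eq_lift, one_mul,
        ← std_reduce p hM, hM', ← resc_eval, ← eq_add_mul_ediv p (hS i hi)])
    (g := fun _ => 1) (by simp) (by simp)
  simp only [mul_one] at h
  refine h.trans (le_of_eq ?_)
  congr 2
  refine sum_Nm_congr p hk (k * n) S x c (fun i => (((x i - r) / p ^ a : ℤ) : ZMod (p ^ (n - a))))
    (fun i => (x i : ZMod (p ^ n))) fun i hi i' hi' => ?_
  have := resc_class p (μ := n - a) (hS i hi) (hS i' hi')
  rwa [Nat.add_sub_cancel' han] at this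

end Basic

/-! ### Flat polynomials with prescribed Taylor expansion -/

section Algebra

open Polynomial

variable {A : Type*} [CommRing A]

lemma exists_antideriv {k m : ℕ} (hu : ∀ i < k, IsUnit ((i + 1 : ℕ) : A)) (f : A[X])
    (hf : f.natDegree < k) (hm : X ^ m ∣ f) :
    ∃ R : A[X], derivative R = f ∧ R.natDegree ≤ k ∧ X ^ (m + 1) ∣ R := by
  choose! v hv using fun i (hi : i < k) => (hu i hi).exists_right_inv
  refine ⟨∑ i ∈ Finset.range k, C (f.coeff i * v i) * X ^ (i + 1), ?_, ?_, ?_⟩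
  · rw [derivative_sum]
    conv_rhs => rw [f.as_sum_range' k hf]
    refine Finset.sum_congr rfl fun i hi => ?_
    rw [derivative_C_mul_X_pow, ← C_mul_X_pow_eq_monomial, Nat.add_sub_cancel, mul_assoc,
      mul_comm (v i), hv i (Finset.mem_range.1 hi), mul_one]
  · refine natDegree_sum_le_of_forall_le _ _ fun i hi => ?_
    exact (natDegree_C_mul_X_pow_le _ _).trans (Finset.mem_range.1 hi)
  · refine Finset.dvd_sum fun i _ => ?_
    rcases lt_or_ge i m with h | h
    · rw [X_pow_dvd_iff.1 hm i h]; simp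
    · exact Dvd.dvd.mul_left (pow_dvd_pow _ (by omega)) _

lemma dvd_sub_const_of_dvd_derivative {k l : ℕ} (hl : l ≤ k)
    (hu : ∀ i < k, IsUnit ((i + 1 : ℕ) : A)) (c : A) (W : A[X])
    (h : (X - C c) ^ l ∣ derivative W) : ∃ κ : A, (X - C c) ^ (l + 1) ∣ W - C κ := by
  set V := W.comp (X + C c) with hV
  have hV' : derivative V = (derivative W).comp (X + C c) := by
    rw [hV, derivative_comp]; simp
  have h1 : X ^ l ∣ derivative V := by
    obtain ⟨U, hU⟩ := h
    rw [hV', hU]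
    exact ⟨U.comp (X + C c), by simp⟩
  have h2 : X ^ (l + 1) ∣ V - C (V.coeff 0) := by
    rw [X_pow_dvd_iff]
    rintro (_ | d) hd
    · simp
    · have h3 := X_pow_dvd_iff.1 h1 d (by omega)
      rw [coeff_derivative] at h3
      have h4 : IsUnit ((d : A) + 1) := by have := hu d (by omega); push_cast at this; exact this
      have h5 : V.coeff (d + 1) = 0 := (IsUnit.mul_left_eq_zero h4).1 h3
      simp [h5]
  obtain ⟨U, hU⟩ := h2
  refine ⟨V.coeff 0, U.comp (X - C c), ?_⟩
  have h3 := congrArg (fun f : A[X] => f.comp (X - C c)) hU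
  simp only [sub_comp, C_comp, mul_comp, pow_comp, X_comp] at h3
  rw [← h3, hV, comp_assoc]
  simp

/-- Any jet of order `l` at a unit `c`, up to a constant, is realised by a polynomial of degree
at most `k` that vanishes to order `k - l + 1` at the origin. After differentiation this is
division by `X ^ (k - l)` modulo `(X - c) ^ l`. -/
lemma exists_flat_aux [Nontrivial A] {k l : ℕ} (hl : 1 ≤ l) (hlk : l < k)
    (hu : ∀ i < k, IsUnit ((i + 1 : ℕ) : A)) {c : A} (hc : IsUnit c) (Q : A[X]) :
    ∃ (R : A[X]) (κ : A), R.natDegree ≤ k ∧ X ^ (k - l + 1) ∣ R ∧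
      (X - C c) ^ (l + 1) ∣ R - Q - C κ := by
  obtain ⟨d, hd⟩ := hc.exists_left_inv
  have hcop : IsCoprime (X ^ (k - l) : A[X]) ((X - C c) ^ l) := by
    refine IsCoprime.pow ⟨C d, -C d, ?_⟩
    have : C d * C c = (1 : A[X]) := by rw [← C_mul, hd, C_1]
    linear_combination this
  obtain ⟨u, v, huv⟩ := hcop
  have hmon : ((X - C c) ^ l).Monic := (monic_X_sub_C c).pow l
  set S := (u * derivative Q) %ₘ ((X - C c) ^ l) with hS
  have hSd : S.natDegree < l := by
    have h1 := degree_modByMonic_lt (u * derivative Q) hmon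
    have h2 : ((X - C c) ^ l).natDegree = l := by
      rw [(monic_X_sub_C c).natDegree_pow]; simp
    have := natDegree_modByMonic_lt (u * derivative Q) hmon (by
      intro h
      rw [h] at h2
      simp at h2
      omega)
    rwa [h2] at this
  have hdiv : (X - C c) ^ l ∣ X ^ (k - l) * S - derivative Q := by
    have h1 := modByMonic_add_div (u * derivative Q) ((X - C c) ^ l)
    rw [← hS] at h1
    refine ⟨-(X ^ (k - l) * ((u * derivative Q) /ₘ ((X - C c) ^ l))) - v * derivative Q, ?_⟩
    linear_combination X ^ (k - l) * h1 + derivative Q * huv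
  obtain ⟨R, hR1, hR2, hR3⟩ := exists_antideriv (m := k - l) hu (X ^ (k - l) * S) (by
    refine natDegree_mul_le.trans_lt ?_
    rw [natDegree_X_pow]
    omega) (dvd_mul_right _ _)
  obtain ⟨κ, hκ⟩ := dvd_sub_const_of_dvd_derivative hlk.le hu c (R - Q) (by
    rw [derivative_sub, hR1]; exact hdiv)
  exact ⟨R, κ, hR2, hR3, hκ⟩

lemma exists_flat [Nontrivial A] {k l : ℕ} (hl : 1 ≤ l) (hlk : l < k)
    (hu : ∀ i < k, IsUnit ((i + 1 : ℕ) : A)) {r r' : A} (hc : IsUnit (r - r')) (Q : A[X]) :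
    ∃ (R : A[X]) (κ : A), R.natDegree ≤ k ∧ (X - C r') ^ (k - l + 1) ∣ R ∧
      (X - C r) ^ (l + 1) ∣ R - Q - C κ := by
  obtain ⟨R, κ, h1, ⟨U, hU⟩, ⟨V, hV⟩⟩ := exists_flat_aux hl hlk hu hc (Q.comp (X + C r'))
  refine ⟨R.comp (X - C r'), κ, ?_, ⟨U.comp (X - C r'), ?_⟩, ⟨V.comp (X - C r'), ?_⟩⟩
  · refine natDegree_comp_le.trans ?_
    have : (X - C r').natDegree ≤ 1 := natDegree_X_sub_C_le _
    nlinarith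
  · rw [hU]; simp
  · have h3 := congrArg (fun f : A[X] => f.comp (X - C r')) hV
    simp only [sub_comp, C_comp, mul_comp, pow_comp, X_comp, comp_assoc, add_comp] at h3
    have e : X - C r' - C (r - r') = X - C r := by rw [C_sub]; ring
    rw [e] at h3
    rw [← h3]
    simp

end Algebra

/-! ### Bilinear estimates -/

section Bilinear

set_option linter.unusedSectionVars false

variable (p : ℕ) [hp : Fact p.Prime]

/-- The asymmetric bilinear decoupling inequality with constant `C`: the exponent `l (l + 1)`
falls on frequencies in one residue class modulo `p ^ a`, the remaining
`k (k + 1) - l (l + 1)` on frequencies in one residue class modulo `p ^ b`, the two classes being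
distinct modulo `p`. -/
def Bil (k l a b n : ℕ) (C : ℝ) : Prop :=
  ∀ (S S' : Finset ℕ) (x : ℕ → ℤ) (c : ℕ → ℂ) (r r' : ℤ),
    (∀ i ∈ S, (p : ℤ) ^ a ∣ x i - r) → (∀ i ∈ S', (p : ℤ) ^ b ∣ x i - r') → ¬ (p : ℤ) ∣ r - r' →
    (avg fun P : Ph p k (k * n) => en S x c P ^ tr l * en S' x c P ^ (tr k - tr l)) ≤
      C * (sq p k n S x c ^ tr l * sq p k n S' x c ^ (tr k - tr l))

lemma Bil.mono {k l a b n : ℕ} {C C' : ℝ} (h : Bil p k l a b n C) (hC : C ≤ C') :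
    Bil p k l a b n C' := fun S S' x c r r' h1 h2 h3 =>
  (h S S' x c r r' h1 h2 h3).trans (mul_le_mul_of_nonneg_right hC
    (mul_nonneg (pow_nonneg (sq_nonneg' p k n S x c) _) (pow_nonneg (sq_nonneg' p k n S' x c) _)))

lemma interp_const {C₁ C₂ s s' : ℝ} (h₁ : 0 ≤ C₁) (h₂ : 0 ≤ C₂) (hs : 0 ≤ s) (hs' : 0 ≤ s')
    {m a b m' a' b' : ℕ} {θ : ℝ} (h0 : 0 ≤ θ) (h1 : θ ≤ 1)
    (h : (m : ℝ) = (1 - θ) * a + θ * b) (h' : (m' : ℝ) = (1 - θ) * a' + θ * b') :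
    (C₁ * (s ^ a * s' ^ a')) ^ (1 - θ) * (C₂ * (s ^ b * s' ^ b')) ^ θ =
      C₁ ^ (1 - θ) * C₂ ^ θ * (s ^ m * s' ^ m') := by
  rw [pow_interp hs h0 h1 h, pow_interp hs' h0 h1 h',
    Real.mul_rpow h₁ (by positivity), Real.mul_rpow h₂ (by positivity),
    Real.mul_rpow (by positivity) (by positivity), Real.mul_rpow (by positivity) (by positivity)]
  ring

/-- Interpolation of two estimates for the same pair of sums. -/
lemma interp_le {k M : ℕ} (S S' : Finset ℕ) (x : ℕ → ℤ) (c : ℕ → ℂ)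
    {C₁ C₂ s s' : ℝ} (h₁ : 0 ≤ C₁) (h₂ : 0 ≤ C₂) (hs : 0 ≤ s) (hs' : 0 ≤ s')
    {m a b m' a' b' : ℕ} {θ : ℝ} (h0 : 0 ≤ θ) (h1 : θ ≤ 1)
    (h : (m : ℝ) = (1 - θ) * a + θ * b) (h' : (m' : ℝ) = (1 - θ) * a' + θ * b')
    (e₁ : (avg fun P : Ph p k M => en S x c P ^ a * en S' x c P ^ a') ≤ C₁ * (s ^ a * s' ^ a'))
    (e₂ : (avg fun P : Ph p k M => en S x c P ^ b * en S' x c P ^ b') ≤ C₂ * (s ^ b * s' ^ b')) :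
    (avg fun P : Ph p k M => en S x c P ^ m * en S' x c P ^ m') ≤
      C₁ ^ (1 - θ) * C₂ ^ θ * (s ^ m * s' ^ m') := by
  have hn : ∀ (a a' : ℕ), 0 ≤ avg fun P : Ph p k M => en S x c P ^ a * en S' x c P ^ a' :=
    fun a a' => avg_nonneg fun P =>
      mul_nonneg (pow_nonneg (en_nonneg _ _ _ _) _) (pow_nonneg (en_nonneg _ _ _ _) _)
  refine (avg_pow_holder (fun P => en_nonneg S x c P) (fun P => en_nonneg S' x c P)
    h0 h1 h h').trans ?_
  rw [← interp_const h₁ h₂ hs hs' h0 h1 h h']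
  exact mul_le_mul (Real.rpow_le_rpow (hn _ _) e₁ (by linarith))
    (Real.rpow_le_rpow (hn _ _) e₂ h0) (Real.rpow_nonneg (hn _ _) _)
    (Real.rpow_nonneg (by positivity) _)

/-- The trivial bilinear bound, by Hölder's inequality and rescaling. -/
lemma Bil_trivial {k l a b n : ℕ} (hk : 1 ≤ k) (hl : l ≤ k) (ha : a ≤ n) (hb : b ≤ n)
    {C₁ C₂ : ℝ} (h₁ : 0 ≤ C₁) (h₂ : 0 ≤ C₂) (hD₁ : Dec p k (n - a) C₁)
    (hD₂ : Dec p k (n - b) C₂) :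
    Bil p k l a b n (C₂ ^ (1 - (tr l : ℝ) / tr k) * C₁ ^ ((tr l : ℝ) / tr k)) := by
  intro S S' x c r r' hS hS' _
  have hT : (0 : ℝ) < tr k := by exact_mod_cast one_le_tr hk
  have hlk : tr l ≤ tr k := tr_mono hl
  have hlk' : (tr l : ℝ) ≤ tr k := by exact_mod_cast hlk
  refine interp_le p S S' x c h₂ h₁ (sq_nonneg' p k n S x c) (sq_nonneg' p k n S' x c)
    (a := 0) (b := tr k) (a' := tr k) (b' := 0) (by positivity)
    (div_le_one_of_le₀ hlk' hT.le) ?_ ?_ ?_ ?_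
  · field_simp; simp
  · push_cast [Nat.cast_sub hlk]; field_simp; simp
  · simpa using Dec.rescale p hk hb h₂ hD₂ S' x c r' hS'
  · simpa using Dec.rescale p hk ha h₁ hD₁ S x c r hS

/-- Hölder's inequality relating neighbouring bilinear quantities; the two sums trade places in
the second one. -/
lemma Bil_holder {k l a b n : ℕ} (hl : 1 ≤ l) (hlk : l ≤ k) {C₁ C₂ : ℝ}
    (h₁ : 0 ≤ C₁) (h₂ : 0 ≤ C₂) (hB₁ : Bil p k (l - 1) a b n C₁)
    (hB₂ : Bil p k (k - l) b a n C₂) :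
    Bil p k l a b n (C₁ ^ (1 - 1 / ((k : ℝ) - l + 1)) * C₂ ^ (1 / ((k : ℝ) - l + 1))) := by
  intro S S' x c r r' hS hS' hr
  have hkl : (l : ℝ) ≤ k := by exact_mod_cast hlk
  have hd : (0 : ℝ) < (k : ℝ) - l + 1 := by linarith
  have e1 : tr (l - 1) ≤ tr k := tr_mono (by omega)
  have e2 : tr (k - l) ≤ tr k := tr_mono (by omega)
  have e3 : tr l ≤ tr k := tr_mono (by omega)
  refine interp_le p S S' x c h₁ h₂ (sq_nonneg' p k n S x c) (sq_nonneg' p k n S' x c)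
    (by positivity) (by rw [div_le_one hd]; linarith) ?_ ?_ (hB₁ S S' x c r r' hS hS' hr)
    (b := tr k - tr (k - l)) (b' := tr (k - l)) ?_
  · push_cast [Nat.cast_sub e2, tr_cast, Nat.cast_sub hl, Nat.cast_sub hlk]
    field_simp
    ring
  · push_cast [Nat.cast_sub e1, Nat.cast_sub e3, tr_cast, Nat.cast_sub hl, Nat.cast_sub hlk]
    field_simp
    ring
  · have h := hB₂ S' S x c r' r hS' hS (fun h => hr (by rw [← neg_sub]; exact h.neg_right))
    simp only [mul_comm (en S' x c _ ^ tr (k - l)), mul_comm (sq p k n S' x c ^ tr (k - l))] at h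
    exact h

open Polynomial in
/-- Phases that are trivial on the class of `r'` modulo `p ^ b` while acting on the class of `r`
modulo `p ^ a` as a given `l`-dimensional phase in the rescaled variable `(X - r) / p ^ a`, up to a
constant. They are multiples of polynomials vanishing to order `k - l + 1` at `r'` and agreeing to
order `l + 1` at `r` with the given phase; the numerical hypotheses make both errors vanish modulo
`p ^ M`. -/
lemma exists_phase {k l a b M μ : ℕ} (hl : 1 ≤ l) (hlk : l < k) (hkp : k < p) (hM0 : 1 ≤ M)
    (hμ : l * μ ≤ a) (hb : l * (a + μ) ≤ (k - l + 1) * b) (hMle : l * (a + μ) ≤ M)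
    {r r' : ℤ} (hr : ¬ (p : ℤ) ∣ r - r') :
    ∃ (T : Ph p l (l * μ) → Ph p k M) (κ : Ph p l (l * μ) → ℂ), (∀ Q, ‖κ Q‖ = 1) ∧
      (∀ Q (x : ℤ), (p : ℤ) ^ a ∣ x - r → ph (T Q) x = κ Q * ph Q ((x - r) / p ^ a)) ∧
      ∀ Q (x : ℤ), (p : ℤ) ^ b ∣ x - r' → ph (T Q) x = 1 := by
  have hM1 : 1 < p ^ M := Nat.one_lt_pow (by omega) hp.out.one_lt
  have : Fact (1 < p ^ M) := ⟨hM1⟩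
  have hu : ∀ i < k, IsUnit ((i + 1 : ℕ) : ZMod (p ^ M)) := by
    intro i hi
    rw [ZMod.isUnit_iff_coprime]
    refine Nat.Coprime.pow_right _ (Nat.Coprime.symm ?_)
    rw [Nat.Prime.coprime_iff_not_dvd hp.out]
    exact Nat.not_dvd_of_pos_of_lt (by omega) (by omega)
  have hc : IsUnit ((r : ZMod (p ^ M)) - (r' : ZMod (p ^ M))) := by
    have h1 : IsCoprime ((p ^ M : ℕ) : ℤ) (r - r') := by
      push_cast
      refine IsCoprime.pow_left ?_
      exact (Nat.prime_iff_prime_int.1 hp.out).coprime_iff_not_dvd.2 hr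
    obtain ⟨u, v, huv⟩ := h1
    have h2 := congrArg (Int.cast : ℤ → ZMod (p ^ M)) huv
    push_cast at h2
    have h3 : ((p : ZMod (p ^ M))) ^ M = 0 := by exact_mod_cast ZMod.natCast_self (p ^ M)
    rw [h3, mul_zero, zero_add] at h2
    exact IsUnit.of_mul_eq_one_right _ h2
  have hp0 : ∀ e, M ≤ e → (p : ZMod (p ^ M)) ^ e = 0 := by
    intro e he
    have h3 : ((p : ZMod (p ^ M))) ^ M = 0 := by exact_mod_cast ZMod.natCast_self (p ^ M)
    rw [← Nat.add_sub_cancel' he, pow_add, h3, zero_mul]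
  choose R κ hR1 hR2 hR3 using fun Q : Ph p l (l * μ) =>
    exists_flat hl hlk hu hc (resc p M a r Q)
  -- both Taylor errors vanish modulo `p ^ (l * (a + μ))`; multiplication by `E` turns phases to
  -- this modulus into phases to the modulus `p ^ M`
  obtain ⟨E, hE⟩ : ∃ E : ZMod (p ^ M), E = (p : ZMod (p ^ M)) ^ (M - l * (a + μ)) := ⟨_, rfl⟩
  have hdeg : ∀ Q, (C E * R Q).natDegree ≤ k := fun Q =>
    (natDegree_C_mul_le _ _).trans (hR1 Q)
  refine ⟨fun Q => toPh k (C E * R Q), fun Q => ZMod.stdAddChar (E * κ Q),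
    fun Q => norm_std _, ?_, ?_⟩
  · intro Q x hx
    rw [ph_toPh p _ (hdeg Q), ph_eq_lift, ← std_reduce p (M := M) (M' := l * μ)
      (le_trans (Nat.mul_le_mul_left _ (by omega)) hMle), ← AddChar.map_add_eq_mul]
    congr 1
    obtain ⟨U, hU⟩ := hR3 Q
    have h1 := congrArg (Polynomial.eval (x : ZMod (p ^ M))) hU
    simp only [eval_sub, eval_mul, eval_pow, eval_X, eval_C] at h1
    have h2 := resc_eval p M a r ((x - r) / p ^ a) Q
    rw [← eq_add_mul_ediv p hx] at h2
    obtain ⟨y, hy⟩ := hx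
    have h3 : (x : ZMod (p ^ M)) - r = (p : ZMod (p ^ M)) ^ a * (y : ZMod (p ^ M)) := by
      exact_mod_cast congrArg (Int.cast : ℤ → ZMod (p ^ M)) hy
    have h4 : E * ((p : ZMod (p ^ M)) ^ a) ^ (l + 1) = 0 := by
      rw [hE, ← pow_mul, ← pow_add]
      refine hp0 _ ?_
      have : l * (a + μ) ≤ a * (l + 1) := by nlinarith
      omega
    have h5 : E * (p : ZMod (p ^ M)) ^ (l * a) = (p : ZMod (p ^ M)) ^ (M - l * μ) := by
      rw [hE, ← pow_add]
      congr 1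
      have : l * (a + μ) = l * a + l * μ := by ring
      omega
    rw [h3, mul_pow, h2] at h1
    simp only [eval_mul, eval_C]
    rw [← h5]
    linear_combination E * h1 +
      ((y : ZMod (p ^ M)) ^ (l + 1) * eval (x : ZMod (p ^ M)) U) * h4
  · intro Q x hx
    rw [ph_toPh p _ (hdeg Q)]
    obtain ⟨U, hU⟩ := hR2 Q
    obtain ⟨y, hy⟩ := hx
    have h3 : (x : ZMod (p ^ M)) - r' = (p : ZMod (p ^ M)) ^ b * (y : ZMod (p ^ M)) := by
      exact_mod_cast congrArg (Int.cast : ℤ → ZMod (p ^ M)) hy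
    have h4 : E * ((p : ZMod (p ^ M)) ^ b) ^ (k - l + 1) = 0 := by
      rw [hE, ← pow_mul, ← pow_add]
      refine hp0 _ ?_
      rw [mul_comm b]
      omega
    rw [hU]
    simp only [eval_sub, eval_mul, eval_pow, eval_X, eval_C]
    rw [h3, mul_pow, ← mul_assoc, ← mul_assoc, h4]
    simp

/-- Lower-dimensional decoupling: the sum `S'` is invariant under phases vanishing to order
`k - l + 1` on its residue class, and along such phases the sum `S` is an exponential sum over
the moment curve in dimension `l`, up to the error of the Taylor expansion of order `l`. -/
lemma Bil_lower {k l a b n μ : ℕ} (hl : 1 ≤ l) (hlk : l < k) (hkp : k < p) (ha : 1 ≤ a)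
    (hμ : l * μ ≤ a) (hb : l * (a + μ) ≤ (k - l + 1) * b)
    (hn : a + μ ≤ n) {C C' : ℝ} (hC : 0 ≤ C) (hC' : 0 ≤ C') (hD : Dec p l μ C)
    (hB : Bil p k l (a + μ) b n C') : Bil p k l a b n (C * C') := by
  intro S S' x c r r' hS hS' hr
  obtain ⟨T, κ, hκ, hT, hT'⟩ := exists_phase p (M := k * n) hl hlk hkp
    (Nat.mul_pos (by omega) (by omega)) hμ hb (Nat.mul_le_mul hlk.le hn) hr
  set g := fun P : Ph p k (k * n) => en S' x c P ^ (tr k - tr l) with hg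
  have ht := transfer p hl hD hC S x c (fun i => (x i - r) / p ^ a) T κ hκ
    (fun Q i hi => hT Q (x i) (hS i hi))
    (g := g) (fun P => pow_nonneg (en_nonneg _ _ _ _) _)
    (by
      intro P Q
      simp only [hg]
      congr 1
      unfold en es
      congr 2
      refine Finset.sum_congr rfl fun i hi => ?_
      rw [ph_add, hT' Q (x i) (hS' i hi), mul_one])
  refine ht.trans ?_
  set s' := sq p k n S' x c ^ (tr k - tr l) with hs'
  have hs'0 : 0 ≤ s' := pow_nonneg (sq_nonneg' p k n S' x c) _
  have ht0 := tr_ne_zero hl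
  set t : ℕ → ℤ := fun i => (x i - r) / p ^ a with htdef
  have hj : ∀ j : ZMod (p ^ μ),
      (avg fun P : Ph p k (k * n) => en (cl p μ S t j) x c P ^ tr l * g P) ^ ((tr l : ℝ)⁻¹) ≤
        (C' * s') ^ ((tr l : ℝ)⁻¹) * sq p k n (cl p μ S t j) x c := by
    intro j
    have hq := sq_nonneg' p k n (cl p μ S t j) x c
    have h1 := hB (cl p μ S t j) S' x c (r + p ^ a * (j.val : ℤ)) r' (by
        intro i hi
        rw [Finset.mem_filter] at hi
        have e1 := eq_add_mul_ediv p (hS i hi.1)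
        have e2 : x i - (r + p ^ a * (j.val : ℤ)) = p ^ a * (t i - j.val) := by
          rw [htdef]; linear_combination e1
        rw [e2, pow_add]
        refine mul_dvd_mul_left _ ?_
        have e3 : ((t i - j.val : ℤ) : ZMod (p ^ μ)) = 0 := by
          push_cast
          rw [hi.2]
          simp
        exact_mod_cast (ZMod.intCast_zmod_eq_zero_iff_dvd _ _).1 e3) hS' (by
        intro h
        apply hr
        have e1 : (p : ℤ) ∣ p ^ a * (j.val : ℤ) :=
          Dvd.dvd.mul_right (dvd_pow_self _ (by omega)) _
        have := dvd_sub h e1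
        ring_nf at this ⊢
        exact this)
    calc _ ≤ (C' * s' * sq p k n (cl p μ S t j) x c ^ tr l) ^ ((tr l : ℝ)⁻¹) := by
          refine Real.rpow_le_rpow (avg_nonneg fun P => mul_nonneg
            (pow_nonneg (en_nonneg _ _ _ _) _) (pow_nonneg (en_nonneg _ _ _ _) _)) ?_
            (by positivity)
          refine h1.trans (le_of_eq ?_)
          rw [hs']; ring
      _ = _ := by
          rw [Real.mul_rpow (by positivity) (by positivity), Real.pow_rpow_inv_natCast hq ht0]
  calc _ ≤ C * (∑ j : ZMod (p ^ μ),
        (C' * s') ^ ((tr l : ℝ)⁻¹) * sq p k n (cl p μ S t j) x c) ^ tr l := by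
        refine mul_le_mul_of_nonneg_left (pow_le_pow_left₀ (Finset.sum_nonneg fun j _ =>
          Real.rpow_nonneg (avg_nonneg fun P => mul_nonneg
            (pow_nonneg (en_nonneg _ _ _ _) _) (pow_nonneg (en_nonneg _ _ _ _) _)) _)
          (Finset.sum_le_sum fun j _ => hj j) _) hC
    _ = _ := by
        rw [← Finset.mul_sum, mul_pow, Real.rpow_inv_natCast_pow (by positivity) ht0,
          sum_sq_filter p (by omega) n S x c (fun i => (t i : ZMod (p ^ μ)))]
        · ring
        · intro i hi i' hi' h
          rw [resc_class p (hS i hi) (hS i' hi')]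
          rw [ZMod.intCast_eq_intCast_iff_dvd_sub] at h ⊢
          refine dvd_trans ?_ h
          exact_mod_cast pow_dvd_pow p hn

end Bilinear

/-! ### From bilinear to linear decoupling -/

section BroadNarrow

set_option linter.unusedSectionVars false

variable (p : ℕ) [hp : Fact p.Prime]

lemma en_pow_le_sum {k M : ℕ} (a : ℕ) {t : ℕ} (ht : 1 ≤ t) (S : Finset ℕ) (x : ℕ → ℤ) (c : ℕ → ℂ)
    (P : Ph p k M) :
    en S x c P ^ t ≤ (p : ℝ) ^ (2 * t * a) * ∑ j : ZMod (p ^ a), en (cl p a S x j) x c P ^ t := by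
  obtain ⟨u, rfl⟩ := Nat.exists_eq_add_of_le' ht
  have hp1 : (1 : ℝ) ≤ p := by exact_mod_cast hp.out.one_le
  have h0 : ∀ j ∈ (Finset.univ : Finset (ZMod (p ^ a))), 0 ≤ en (cl p a S x j) x c P :=
    fun j _ => en_nonneg _ _ _ _
  have h1 := pow_sum_div_card_le_sum_pow h0 u
  have hc : ((Finset.univ : Finset (ZMod (p ^ a))).card : ℝ) = (p : ℝ) ^ a := by
    simp [ZMod.card]
  rw [hc, div_le_iff₀' (by positivity)] at h1
  calc _ ≤ ((p : ℝ) ^ a * ∑ j : ZMod (p ^ a), en (cl p a S x j) x c P) ^ (u + 1) :=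
        pow_le_pow_left₀ (en_nonneg _ _ _ _) (en_le_sum p a S x c P) _
    _ ≤ ((p : ℝ) ^ a) ^ (u + 1) *
        (((p : ℝ) ^ a) ^ u * ∑ j : ZMod (p ^ a), en (cl p a S x j) x c P ^ (u + 1)) := by
        rw [mul_pow]
        exact mul_le_mul_of_nonneg_left h1 (by positivity)
    _ ≤ _ := by
        rw [← mul_assoc]
        refine mul_le_mul_of_nonneg_right ?_
          (Finset.sum_nonneg fun j _ => pow_nonneg (en_nonneg _ _ _ _) _)
        rw [← pow_mul, ← pow_mul, ← pow_add]
        refine pow_le_pow_right₀ hp1 ?_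
        nlinarith

/-- A bilinear estimate at fine scales implies one at the coarsest scale, at the cost of summing
over all pairs of residue classes. -/
lemma Bil_unit {k l a b n : ℕ} (hl : 1 ≤ l) (hlk : l < k)
    (han : a ≤ n) (hbn : b ≤ n) {C : ℝ} (hC : 0 ≤ C) (hB : Bil p k l a b n C) :
    Bil p k l 1 1 n ((p : ℝ) ^ ((2 * tr k + 1) * (a + b)) * C) := by
  intro S S' x c r r' hS hS' hr
  have hp1 : (1 : ℝ) ≤ p := by exact_mod_cast hp.out.one_le
  have hk : 1 ≤ k := by omega
  have ht : 1 ≤ tr l := one_le_tr hl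
  have hlk2 : tr l + 1 ≤ tr k := by
    have h1 := two_mul_tr l
    have h2 := two_mul_tr k
    nlinarith
  have ht' : 1 ≤ tr k - tr l := by omega
  have hs := sq_nonneg' p k n S x c
  have hs' := sq_nonneg' p k n S' x c
  have pair : ∀ (j : ZMod (p ^ a)) (j' : ZMod (p ^ b)),
      (avg fun P : Ph p k (k * n) => en (cl p a S x j) x c P ^ tr l *
        en (cl p b S' x j') x c P ^ (tr k - tr l)) ≤
      C * (sq p k n S x c ^ tr l * sq p k n S' x c ^ (tr k - tr l)) := by
    intro j j'
    have hpos : 0 ≤ C * (sq p k n S x c ^ tr l * sq p k n S' x c ^ (tr k - tr l)) := by positivity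
    rcases Finset.eq_empty_or_nonempty (cl p a S x j) with he | ⟨i, hi⟩
    · simp only [he, en_empty, zero_pow (by omega : tr l ≠ 0), zero_mul]
      simpa [avg] using hpos
    rcases Finset.eq_empty_or_nonempty (cl p b S' x j') with he | ⟨i', hi'⟩
    · simp only [he, en_empty, zero_pow (by omega : tr k - tr l ≠ 0), mul_zero]
      simpa [avg] using hpos
    rw [Finset.mem_filter] at hi hi'
    refine (hB (cl p a S x j) (cl p b S' x j') x c (x i) (x i') ?_ ?_ ?_).trans ?_
    · intro e he
      rw [Finset.mem_filter] at he
      have := he.2.trans hi.2.symm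
      rw [eq_comm, ZMod.intCast_eq_intCast_iff_dvd_sub] at this
      exact_mod_cast this
    · intro e he
      rw [Finset.mem_filter] at he
      have := he.2.trans hi'.2.symm
      rw [eq_comm, ZMod.intCast_eq_intCast_iff_dvd_sub] at this
      exact_mod_cast this
    · intro h
      have h1 := hS i hi.1
      have h2 := hS' i' hi'.1
      rw [pow_one] at h1 h2
      apply hr
      have h3 := dvd_add (dvd_sub h h1) h2
      have e : x i - x i' - (x i - r) + (x i' - r') = r - r' := by ring
      rwa [e] at h3
    · refine mul_le_mul_of_nonneg_left (mul_le_mul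
        (pow_le_pow_left₀ (sq_nonneg' p k n _ x c) (sq_mono_filter p hk n S x c han j) _)
        (pow_le_pow_left₀ (sq_nonneg' p k n _ x c) (sq_mono_filter p hk n S' x c hbn j') _)
        (pow_nonneg (sq_nonneg' p k n _ x c) _) (pow_nonneg hs _)) hC
  set B := C * (sq p k n S x c ^ tr l * sq p k n S' x c ^ (tr k - tr l)) with hBdef
  have hB0 : 0 ≤ B := by positivity
  calc _ ≤ avg fun P : Ph p k (k * n) =>
        (p : ℝ) ^ (2 * tr l * a) * (p : ℝ) ^ (2 * (tr k - tr l) * b) *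
        ∑ j : ZMod (p ^ a), ∑ j' : ZMod (p ^ b), en (cl p a S x j) x c P ^ tr l *
          en (cl p b S' x j') x c P ^ (tr k - tr l) := by
        refine avg_mono fun P => ?_
        refine (mul_le_mul (en_pow_le_sum p a ht S x c P) (en_pow_le_sum p b ht' S' x c P)
          (pow_nonneg (en_nonneg _ _ _ _) _) (mul_nonneg (by positivity)
            (Finset.sum_nonneg fun j _ => pow_nonneg (en_nonneg _ _ _ _) _))).trans (le_of_eq ?_)
        rw [← Finset.sum_mul_sum]
        ring
    _ = (p : ℝ) ^ (2 * tr l * a) * (p : ℝ) ^ (2 * (tr k - tr l) * b) *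
        ∑ j : ZMod (p ^ a), ∑ j' : ZMod (p ^ b), (avg fun P : Ph p k (k * n) =>
          en (cl p a S x j) x c P ^ tr l * en (cl p b S' x j') x c P ^ (tr k - tr l)) := by
        rw [avg_mul_left, avg_sum]
        simp only [avg_sum]
    _ ≤ (p : ℝ) ^ (2 * tr l * a) * (p : ℝ) ^ (2 * (tr k - tr l) * b) *
        ∑ j : ZMod (p ^ a), ∑ j' : ZMod (p ^ b), B := by
        refine mul_le_mul_of_nonneg_left (Finset.sum_le_sum fun j _ => Finset.sum_le_sum
          fun j' _ => pair j j') (by positivity)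
    _ = (p : ℝ) ^ (2 * tr l * a + 2 * (tr k - tr l) * b + (a + b)) * B := by
        simp only [Finset.sum_const, Finset.card_univ, ZMod.card, nsmul_eq_mul]
        push_cast
        rw [pow_add, pow_add, pow_add]
        ring
    _ ≤ (p : ℝ) ^ ((2 * tr k + 1) * (a + b)) * B := by
        refine mul_le_mul_of_nonneg_right (pow_le_pow_right₀ hp1 ?_) hB0
        have e1 : tr l * a ≤ tr k * a := Nat.mul_le_mul_right _ (by omega)
        have e2 : (tr k - tr l) * b ≤ tr k * b := Nat.mul_le_mul_right _ (by omega)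
        nlinarith
    _ = _ := by rw [hBdef]; ring

/-- The bilinear estimate at the coarsest scale controls products of sums over two distinct
classes modulo `p`, symmetrically, by the Cauchy–Schwarz inequality. -/
lemma Bil.symm_pair {k l n : ℕ} (hl : l ≤ k) {C : ℝ} (hC : 0 ≤ C) (hB : Bil p k l 1 1 n C)
    {S S' : Finset ℕ} {x : ℕ → ℤ} {c : ℕ → ℂ} {r r' : ℤ}
    (hS : ∀ i ∈ S, (p : ℤ) ^ 1 ∣ x i - r) (hS' : ∀ i ∈ S', (p : ℤ) ^ 1 ∣ x i - r')
    (hr : ¬ (p : ℤ) ∣ r - r') {s : ℝ} (hs : sq p k n S x c ≤ s) (hs' : sq p k n S' x c ≤ s) :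
    (avg fun P : Ph p k (k * n) => (‖es S x c P‖ * ‖es S' x c P‖) ^ tr k) ≤ C * s ^ tr k := by
  have hs0 := (sq_nonneg' p k n S x c).trans hs
  have hT : tr l ≤ tr k := tr_mono hl
  have hr' : ¬ (p : ℤ) ∣ r' - r := fun h => hr (by rw [← neg_sub]; exact h.neg_right)
  have key : ∀ {a b : ℝ}, 0 ≤ a → 0 ≤ b → a ≤ s → b ≤ s →
      C * (a ^ tr l * b ^ (tr k - tr l)) ≤ C * s ^ tr k := by
    intro a b ha hb has hbs
    refine mul_le_mul_of_nonneg_left ?_ hC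
    calc _ ≤ s ^ tr l * s ^ (tr k - tr l) := by gcongr
      _ = _ := by rw [← pow_add, Nat.add_sub_cancel' hT]
  have h1 := (hB S S' x c r r' hS hS' hr).trans
    (key (sq_nonneg' p k n S x c) (sq_nonneg' p k n S' x c) hs hs')
  have h2 := (hB S' S x c r' r hS' hS hr').trans
    (key (sq_nonneg' p k n S' x c) (sq_nonneg' p k n S x c) hs' hs)
  simp only [en, ← pow_mul] at h1 h2
  simp only [mul_comm (‖es S' x c _‖ ^ (2 * tr l))] at h2
  have hnn : ∀ a b : ℕ, 0 ≤ avg fun P : Ph p k (k * n) => ‖es S x c P‖ ^ a * ‖es S' x c P‖ ^ b :=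
    fun a b => avg_nonneg fun P => by positivity
  have h3 := avg_pow_holder (G := Ph p k (k * n)) (F := fun P => ‖es S x c P‖)
    (F' := fun P => ‖es S' x c P‖) (fun _ => norm_nonneg _) (fun _ => norm_nonneg _)
    (m := tr k) (m' := tr k) (a := 2 * tr l) (a' := 2 * (tr k - tr l))
    (b := 2 * (tr k - tr l)) (b' := 2 * tr l) (θ := 1 / 2) (by norm_num) (by norm_num)
    (by push_cast [Nat.cast_sub hT]; ring) (by push_cast [Nat.cast_sub hT]; ring)
  simp only [mul_pow]
  refine h3.trans ?_
  have hB0 : 0 ≤ C * s ^ tr k := by positivity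
  calc _ ≤ (C * s ^ tr k) ^ (1 - (1 : ℝ) / 2) * (C * s ^ tr k) ^ ((1 : ℝ) / 2) :=
        mul_le_mul (Real.rpow_le_rpow (hnn _ _) h1 (by norm_num))
          (Real.rpow_le_rpow (hnn _ _) h2 (by norm_num)) (Real.rpow_nonneg (hnn _ _) _)
          (Real.rpow_nonneg hB0 _)
    _ = _ := by
        rw [← Real.rpow_add_of_nonneg hB0 (by norm_num) (by norm_num)]
        norm_num

/-- The Bourgain–Guth argument at one scale: pairs of equal classes modulo `p` are rescaled, and
pairs of distinct classes are handled by the bilinear estimate. -/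
lemma Dec_step {k l n : ℕ} (hl : 1 ≤ l) (hlk : l < k) (hn : 1 ≤ n) {C₁ C₂ : ℝ} (h₁ : 0 ≤ C₁)
    (h₂ : 0 ≤ C₂) (hD : Dec p k (n - 1) C₁) (hB : Bil p k l 1 1 n C₂) :
    Dec p k n ((C₁ ^ ((tr k : ℝ)⁻¹) + (p : ℝ) ^ 2 * C₂ ^ ((tr k : ℝ)⁻¹)) ^ tr k) := by
  intro S x c
  have hk : 1 ≤ k := by omega
  have hT := one_le_tr hk
  have hT0 := tr_ne_zero hk
  set s := sq p k n S x c with hs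
  have hs0 : 0 ≤ s := sq_nonneg' p k n S x c
  have hcl : ∀ j : ZMod (p ^ 1), ∀ i ∈ cl p 1 S x j, (p : ℤ) ^ 1 ∣ x i - (j.val : ℤ) := by
    intro j i hi
    rw [Finset.mem_filter] at hi
    have : ((x i - j.val : ℤ) : ZMod (p ^ 1)) = 0 := by
      push_cast
      rw [hi.2]
      simp
    exact_mod_cast (ZMod.intCast_zmod_eq_zero_iff_dvd _ _).1 this
  set f : ZMod (p ^ 1) → Ph p k (k * n) → ℝ := fun j P => ‖es (cl p 1 S x j) x c P‖ with hf
  have hf0 : ∀ j P, 0 ≤ f j P := fun j P => norm_nonneg _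
  have hpt : ∀ P : Ph p k (k * n), en S x c P ≤
      ∑ z ∈ (Finset.univ : Finset (ZMod (p ^ 1) × ZMod (p ^ 1))), f z.1 P * f z.2 P := by
    intro P
    rw [← Finset.univ_product_univ, Finset.sum_product]
    dsimp only
    rw [← Finset.sum_mul_sum, ← pow_two]
    unfold en
    rw [es_eq_sum_cl p 1]
    gcongr
    exact norm_sum_le _ _
  have hdiag : ∀ j, nm (tr k) (fun P => f j P * f j P) ≤
      C₁ ^ ((tr k : ℝ)⁻¹) * sq p k n (cl p 1 S x j) x c := by
    intro j
    have hq := sq_nonneg' p k n (cl p 1 S x j) x c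
    have h := Dec.rescale p hk hn h₁ hD (cl p 1 S x j) x c j.val (hcl j)
    calc _ ≤ (C₁ * sq p k n (cl p 1 S x j) x c ^ tr k) ^ ((tr k : ℝ)⁻¹) := by
          unfold nm
          refine Real.rpow_le_rpow (avg_nonneg fun P => by positivity) ?_ (by positivity)
          simp only [← pow_two]
          exact h
      _ = _ := by
          rw [Real.mul_rpow h₁ (by positivity), Real.pow_rpow_inv_natCast hq hT0]
  have hoff : ∀ j j', j ≠ j' → nm (tr k) (fun P => f j P * f j' P) ≤
      C₂ ^ ((tr k : ℝ)⁻¹) * s := by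
    intro j j' hjj
    have h := Bil.symm_pair p hlk.le h₂ hB (hcl j) (hcl j') (by
      intro h
      apply hjj
      have h' : ((j.val : ℤ) : ZMod (p ^ 1)) = ((j'.val : ℤ) : ZMod (p ^ 1)) := by
        rw [eq_comm, ZMod.intCast_eq_intCast_iff_dvd_sub]
        simpa using h
      simpa using h') (sq_mono_filter p hk n S x c hn j) (sq_mono_filter p hk n S x c hn j')
    calc _ ≤ (C₂ * s ^ tr k) ^ ((tr k : ℝ)⁻¹) := by
          unfold nm
          exact Real.rpow_le_rpow (avg_nonneg fun P => by positivity) h (by positivity)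
      _ = _ := by
          rw [Real.mul_rpow h₂ (by positivity), Real.pow_rpow_inv_natCast hs0 hT0]
  have hnm : nm (tr k) (fun P : Ph p k (k * n) => en S x c P) ≤
      (C₁ ^ ((tr k : ℝ)⁻¹) + (p : ℝ) ^ 2 * C₂ ^ ((tr k : ℝ)⁻¹)) * s := by
    calc _ ≤ nm (tr k) (fun P : Ph p k (k * n) =>
          ∑ z ∈ (Finset.univ : Finset (ZMod (p ^ 1) × ZMod (p ^ 1))), f z.1 P * f z.2 P) :=
          nm_mono (fun P => en_nonneg _ _ _ _) hpt
      _ ≤ ∑ z ∈ (Finset.univ : Finset (ZMod (p ^ 1) × ZMod (p ^ 1))),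
          nm (tr k) (fun P => f z.1 P * f z.2 P) :=
          nm_sum_le hT _ fun z P => mul_nonneg (hf0 _ _) (hf0 _ _)
      _ ≤ ∑ z ∈ (Finset.univ : Finset (ZMod (p ^ 1) × ZMod (p ^ 1))),
          ((if z.1 = z.2 then C₁ ^ ((tr k : ℝ)⁻¹) * sq p k n (cl p 1 S x z.1) x c else 0) +
            C₂ ^ ((tr k : ℝ)⁻¹) * s) := by
          refine Finset.sum_le_sum fun z _ => ?_
          split_ifs with h
          · rw [← h]
            exact (hdiag z.1).trans (le_add_of_nonneg_right (by positivity))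
          · rw [zero_add]
            exact hoff _ _ h
      _ = _ := by
          rw [Finset.sum_add_distrib, ← Finset.univ_product_univ, Finset.sum_product]
          simp only [Finset.sum_ite_eq, Finset.mem_univ, if_true, ← Finset.mul_sum]
          rw [sum_sq_filter p hk n S x c (fun i => (x i : ZMod (p ^ 1)))]
          · simp only [Finset.sum_const, Finset.card_product, Finset.card_univ, ZMod.card,
              nsmul_eq_mul, pow_one]
            push_cast
            rw [← hs]
            ring
          · intro i _ i' _ h
            rw [ZMod.intCast_eq_intCast_iff_dvd_sub] at h ⊢
            refine dvd_trans ?_ h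
            exact_mod_cast pow_dvd_pow p hn
  rw [← mul_pow, ← nm_pow hT0 fun P => en_nonneg S x c P]
  exact pow_le_pow_left₀ (nm_nonneg fun P => en_nonneg _ _ _ _) hnm _

end BroadNarrow

/-! ### Induction on scales -/

section Scales

set_option linter.unusedSectionVars false

variable (p : ℕ) [hp : Fact p.Prime]

/-- `Adm p k η`: the decoupling constant in dimension `k` at scale `p ^ (-n)` is
`O(p ^ ((η + ε) n))` for every `ε > 0`. -/
def Adm (k : ℕ) (η : ℝ) : Prop :=
  ∀ ε : ℝ, 0 < ε → ∃ C : ℝ, 1 ≤ C ∧ ∀ n : ℕ, Dec p k n (C * (p : ℝ) ^ ((η + ε) * n))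

lemma one_lt_p : (1 : ℝ) < p := by exact_mod_cast hp.out.one_lt

lemma p_pos : (0 : ℝ) < p := zero_lt_one.trans (one_lt_p p)

/-- `Bil_lower` with `μ = a / l` (or up to `a'`) enlarges `a` by the factor `1 + 1 / (2 l)` at least,
so the number `j` of steps needed to reach `a'` depends on `a' / a` and `l` only. -/
lemma Bil_raise_aux {k l a' b n : ℕ} (hl : 1 ≤ l) (hlk : l < k) (hkp : k < p) {C ε B : ℝ}
    (hC : 1 ≤ C) (hD : ∀ μ : ℕ, Dec p l μ (C * (p : ℝ) ^ (ε * μ)))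
    (hb : l * a' ≤ (k - l + 1) * b) (hn : a' ≤ n) (hB0 : 0 ≤ B) (hB : Bil p k l a' b n B) :
    ∀ j a : ℕ, l ≤ a → a ≤ a' → 2 * l * a' ≤ (2 * l + j) * a →
      Bil p k l a b n (C ^ j * (p : ℝ) ^ (ε * ((a' : ℝ) - a)) * B) := by
  have hp0 := p_pos p
  intro j
  induction j with
  | zero =>
    intro a hla haa' h
    have : a = a' := by
      refine le_antisymm haa' ?_
      have : 2 * l * a' ≤ 2 * l * a := by simpa using h
      exact Nat.le_of_mul_le_mul_left this (by omega)
    subst this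
    simpa using hB
  | succ j ih =>
    intro a hla haa' h
    obtain ⟨μ, hμ⟩ : ∃ μ, μ = min (a / l) (a' - a) := ⟨_, rfl⟩
    have hdiv : l * (a / l) ≤ a := Nat.mul_div_le a l
    have hμ1 : μ ≤ a / l := hμ ▸ min_le_left _ _
    have hμ2 : μ ≤ a' - a := hμ ▸ min_le_right _ _
    have hlμ : l * μ ≤ a := (Nat.mul_le_mul_left _ hμ1).trans hdiv
    have hle : a + μ ≤ a' := by omega
    have h2 : a ≤ 2 * l * (a / l) := by
      have h3 : a < l * (a / l) + l := by
        have := Nat.lt_mul_div_succ a (b := l) (by omega)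
        rwa [mul_add, mul_one] at this
      have h4 : 1 ≤ a / l := (Nat.one_le_div_iff (by omega)).2 hla
      nlinarith
    have h5 : 2 * l * a' ≤ (2 * l + j) * (a + μ) := by
      rcases min_choice (a / l) (a' - a) with h6 | h6
      · rw [hμ, h6]
        have : 2 * l * (a / l) ≤ (2 * l + j) * (a / l) := Nat.mul_le_mul_right _ (by omega)
        nlinarith
      · have : a + μ = a' := by omega
        rw [this]
        exact Nat.mul_le_mul_right _ (by omega)
    have h6 := ih (a + μ) (by omega) hle h5
    have h7 := Bil_lower p hl hlk hkp (by omega) hlμ ((Nat.mul_le_mul_left _ hle).trans hb)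
      (hle.trans hn) (by positivity) (by positivity) (hD μ) h6
    refine h7.mono p (le_of_eq ?_)
    have h8 : (p : ℝ) ^ (ε * ((a' : ℝ) - a)) =
        (p : ℝ) ^ (ε * μ) * (p : ℝ) ^ (ε * ((a' : ℝ) - (a + μ : ℕ))) := by
      rw [← Real.rpow_add hp0]
      congr 1
      push_cast
      ring
    rw [h8]
    ring

/-- Iterating `Bil_lower`, the scale `a` can be refined up to the critical ratio
`a' / b = (k - l + 1) / l` at negligible cost, if `l`-dimensional decoupling is known. -/
lemma Bil_raise {k l : ℕ} (hl : 1 ≤ l) (hlk : l < k) (hkp : k < p) (hA : Adm p l 0) {ε : ℝ}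
    (hε : 0 < ε) : ∃ C : ℝ, 1 ≤ C ∧ ∀ (a a' b n : ℕ) (B : ℝ), l ≤ a → a ≤ a' → a' ≤ 4 * a →
      l * a' ≤ (k - l + 1) * b → a' ≤ n → 0 ≤ B → Bil p k l a' b n B →
        Bil p k l a b n (C * (p : ℝ) ^ (ε * n) * B) := by
  obtain ⟨C, hC, hD⟩ := hA ε hε
  simp only [zero_add] at hD
  refine ⟨C ^ (6 * l), one_le_pow₀ hC, fun a a' b n B h1 h2 h3 h4 h5 h6 h7 => ?_⟩
  refine (Bil_raise_aux p hl hlk hkp hC hD h4 h5 h6 h7 (6 * l) a h1 h2 (by nlinarith)).mono p ?_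
  have : ((a' : ℝ) - a) ≤ n := by
    have e1 : (a' : ℝ) ≤ n := by exact_mod_cast h5
    have e2 : (0 : ℝ) ≤ a := by positivity
    linarith
  have hp1 := (one_lt_p p).le
  gcongr

/-- The critical scale attached to `b`: `a_l(b) = (k - l + 1) b / l`. -/
def crit (k l b : ℕ) : ℕ := (k - l + 1) * (b / l)

lemma mul_crit {k l b : ℕ} (h : l ∣ b) : l * crit k l b = (k - l + 1) * b := by
  unfold crit
  rw [mul_left_comm, Nat.mul_div_cancel' h]

lemma crit_le {k l b : ℕ} (hl : 1 ≤ l) (hlk : l ≤ k) : crit k l b ≤ k * b :=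
  Nat.mul_le_mul (by omega) (Nat.div_le_self _ _)

lemma crit_dvd {k l b i : ℕ} (hl : 1 ≤ l) (hlk : l ≤ k) (h : k.factorial ^ (i + 1) ∣ b) :
    k.factorial ^ i ∣ crit k l b := by
  obtain ⟨m, rfl⟩ := h
  obtain ⟨q, hq⟩ := Nat.dvd_factorial hl hlk
  refine Dvd.dvd.mul_left ⟨q * m, ?_⟩ _
  rw [pow_succ]
  refine Nat.div_eq_of_eq_mul_right hl ?_
  conv_lhs => rw [hq]
  rw [← hq]
  have : k.factorial ^ i * k.factorial * m = k.factorial ^ i * (l * q) * m := by rw [← hq]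
  rw [this]
  ring

/-- Stage `i` of the induction on scales: at the critical ratio of scales, the bilinear constant
gains a factor `p ^ (x b)` over `p ^ (η n)`. -/
def Gain (k : ℕ) (η : ℝ) (i l : ℕ) (x : ℝ) : Prop :=
  ∀ ε : ℝ, 0 < ε → ∃ C : ℝ, 1 ≤ C ∧ ∀ b n : ℕ, 1 ≤ b → k.factorial ^ (i + 1) ∣ b →
    k ^ (i + 1) * b ≤ n →
      Bil p k l (crit k l b) b n (C * (p : ℝ) ^ ((η + ε) * n - x * b))

lemma Bil_const {k l a b n : ℕ} (hk : 1 ≤ k) (hl : l ≤ k) (ha : a ≤ n) (hb : b ≤ n) {D : ℝ}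
    (hD0 : 0 < D) (h₁ : Dec p k (n - a) D) (h₂ : Dec p k (n - b) D) : Bil p k l a b n D := by
  refine (Bil_trivial p hk hl ha hb hD0.le hD0.le h₁ h₂).mono p (le_of_eq ?_)
  rw [← Real.rpow_add hD0]
  simp

lemma Gain_zero {k l : ℕ} (hl : 1 ≤ l) (hlk : l < k) {η : ℝ} (hη : 0 ≤ η) (hA : Adm p k η) :
    Gain p k η 0 l 0 := by
  intro ε hε
  obtain ⟨C, hC, hD⟩ := hA ε hε
  refine ⟨C, hC, fun b n hb _ hbn => ?_⟩
  have hp1 := (one_lt_p p).le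
  have hp0 := p_pos p
  have hDm : ∀ a, Dec p k (n - a) (C * (p : ℝ) ^ ((η + ε) * n - 0 * b)) := by
    intro a
    refine (hD (n - a)).mono p ?_
    have : ((n - a : ℕ) : ℝ) ≤ n := by exact_mod_cast Nat.sub_le _ _
    rw [zero_mul, sub_zero]
    gcongr
  have h1 := crit_le (b := b) hl hlk.le
  rw [zero_add, pow_one] at hbn
  exact Bil_const p (by omega) hlk.le (h1.trans hbn) (by nlinarith) (by positivity) (hDm _) (hDm _)

/-- For `l = 0` the bilinear inequality is parabolic rescaling of the second sum. -/
lemma Bil_zero {k : ℕ} (hk : 1 ≤ k) {η : ℝ} (hA : Adm p k η) {ε : ℝ} (hε : 0 < ε) :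
    ∃ C : ℝ, 1 ≤ C ∧ ∀ a b n : ℕ, a ≤ n → b ≤ n →
      Bil p k 0 a b n (C * (p : ℝ) ^ ((η + ε) * n - η * b)) := by
  obtain ⟨C, hC, hD⟩ := hA ε hε
  refine ⟨C, hC, fun a b n ha hb => ?_⟩
  have hp1 := (one_lt_p p).le
  have hp0 := p_pos p
  refine (Bil_trivial p hk (Nat.zero_le k) ha hb (by positivity) (by positivity)
    (hD (n - a)) (hD (n - b))).mono p ?_
  have : ((tr 0 : ℕ) : ℝ) = 0 := by simp [tr]
  rw [this, zero_div, sub_zero, Real.rpow_one, Real.rpow_zero, mul_one]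
  gcongr
  push_cast [Nat.cast_sub hb]
  nlinarith [(Nat.cast_nonneg b : (0 : ℝ) ≤ b)]

end Scales

/-! ### Recursion for the gains -/

section Scales2

set_option linter.unusedSectionVars false

variable (p : ℕ) [hp : Fact p.Prime]

lemma raise_const {C C' ε η y : ℝ} {n : ℕ} :
    C * (p : ℝ) ^ (ε / 2 * n) * (C' * (p : ℝ) ^ ((η + ε / 2) * n - y)) =
      C * C' * (p : ℝ) ^ ((η + ε) * n - y) := by
  have h : (p : ℝ) ^ ((η + ε) * n - y) =
      (p : ℝ) ^ (ε / 2 * n) * (p : ℝ) ^ ((η + ε / 2) * n - y) := by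
    rw [← Real.rpow_add (p_pos p)]
    congr 1
    ring
  rw [h]
  ring

lemma pow_facts {k i b n : ℕ} (hk : 1 ≤ k) (hn : k ^ (i + 2) * b ≤ n) :
    k ^ (i + 1) * (k * b) ≤ n ∧ k ^ (i + 1) * b ≤ n ∧ k * b ≤ n ∧ b ≤ n := by
  have h1 : k ^ (i + 1) * (k * b) ≤ n := by
    have : k ^ (i + 1) * (k * b) = k ^ (i + 2) * b := by ring
    omega
  have h2 : b ≤ k * b := Nat.le_mul_of_pos_left _ (by omega)
  have h3 : 1 ≤ k ^ (i + 1) := Nat.one_le_pow _ _ (by omega)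
  have h4 : k * b ≤ k ^ (i + 1) * (k * b) := Nat.le_mul_of_pos_left _ (by omega)
  have h5 : k ^ (i + 1) * b ≤ k ^ (i + 1) * (k * b) := Nat.mul_le_mul_left _ h2
  refine ⟨h1, ?_, ?_, ?_⟩ <;> omega

lemma dvd_facts {k l i b : ℕ} (hl : 1 ≤ l) (hlk : l ≤ k) (hdvd : k.factorial ^ (i + 1) ∣ b) :
    l ∣ b := (Nat.dvd_factorial hl hlk).trans ((dvd_pow_self _ (by omega)).trans hdvd)

/-- The first factor in Hölder's inequality, with its scale refined to the critical one. -/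
lemma Gain_first {k l i : ℕ} (hl : 2 ≤ l) (hlk : l < k) (hkp : k < p) {η x : ℝ}
    (hA : Adm p (l - 1) 0) (hG : Gain p k η i (l - 1) x) {ε : ℝ} (hε : 0 < ε) :
    ∃ C : ℝ, 1 ≤ C ∧ ∀ b n : ℕ, 1 ≤ b → k.factorial ^ (i + 2) ∣ b → k ^ (i + 2) * b ≤ n →
      Bil p k (l - 1) (crit k l b) b n (C * (p : ℝ) ^ ((η + ε) * n - x * b)) := by
  obtain ⟨C, hC, h⟩ := Bil_raise p (k := k) (l := l - 1) (by omega) (by omega) hkp hA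
    (half_pos hε)
  obtain ⟨C', hC', h'⟩ := hG (ε / 2) (half_pos hε)
  refine ⟨C * C', one_le_mul_of_one_le_of_one_le hC hC', fun b n hb hdvd hn => ?_⟩
  obtain ⟨n1, n2, n3, n4⟩ := pow_facts (by omega) hn
  have hp0 := p_pos p
  have d1 : l ∣ b := dvd_facts (by omega) hlk.le hdvd
  have d2 : l - 1 ∣ b := dvd_facts (by omega) (by omega) hdvd
  have m1 := mul_crit (k := k) d1
  have m2 := mul_crit (k := k) d2
  have hdl := crit_dvd (i := i + 1) (by omega) hlk.le hdvd
  rw [← raise_const]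
  refine h (crit k l b) (crit k (l - 1) b) b n _ ?_ ?_ ?_ m2.le
    ((crit_le (by omega) (by omega)).trans n3) (by positivity)
    (h' b n hb ((pow_dvd_pow _ (show i + 1 ≤ i + 2 by omega)).trans hdvd) n2)
  · have : l ∣ crit k l b := dvd_facts (by omega) hlk.le hdl
    have h0 : 0 < crit k l b := by
      unfold crit
      have := Nat.div_pos (Nat.le_of_dvd hb d1) (by omega)
      positivity
    have := Nat.le_of_dvd h0 this
    omega
  · exact Nat.mul_le_mul (by omega)
      (Nat.div_le_div_left (show l - 1 ≤ l by omega) (show 0 < l - 1 by omega))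
  · refine le_of_mul_le_mul_left ?_ (show 0 < l - 1 by omega)
    rw [m2]
    have e1 : k - (l - 1) + 1 ≤ 2 * (k - l + 1) := by omega
    have e2 : l ≤ 2 * (l - 1) := by omega
    calc (k - (l - 1) + 1) * b ≤ 2 * (k - l + 1) * b := Nat.mul_le_mul_right _ e1
      _ = 2 * (l * crit k l b) := by rw [m1]; ring
      _ ≤ 2 * (2 * (l - 1) * crit k l b) :=
          Nat.mul_le_mul_left _ (Nat.mul_le_mul_right _ e2)
      _ = _ := by ring

/-- The second factor in Hölder's inequality; the roles of the scales `b` and `a = a_l(b)` are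
exchanged. -/
lemma Gain_second {k l i : ℕ} (hl : 1 ≤ l) (hlk : l < k) (hkp : k < p) {η x : ℝ}
    (hA : Adm p (k - l) 0) (hG : Gain p k η i (k - l) x) {ε : ℝ} (hε : 0 < ε) :
    ∃ C : ℝ, 1 ≤ C ∧ ∀ b n : ℕ, 1 ≤ b → k.factorial ^ (i + 2) ∣ b → k ^ (i + 2) * b ≤ n →
      Bil p k (k - l) b (crit k l b) n
        (C * (p : ℝ) ^ ((η + ε) * n - x * (crit k l b : ℕ))) := by
  obtain ⟨C, hC, h⟩ := Bil_raise p (k := k) (l := k - l) (by omega) (by omega) hkp hA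
    (half_pos hε)
  obtain ⟨C', hC', h'⟩ := hG (ε / 2) (half_pos hε)
  refine ⟨C * C', one_le_mul_of_one_le_of_one_le hC hC', fun b n hb hdvd hn => ?_⟩
  obtain ⟨n1, n2, n3, n4⟩ := pow_facts (by omega) hn
  have hp0 := p_pos p
  have d1 : l ∣ b := dvd_facts (by omega) hlk.le hdvd
  have m1 := mul_crit (k := k) d1
  have hdl := crit_dvd (i := i + 1) (by omega) hlk.le hdvd
  obtain ⟨a, ha⟩ : ∃ a, a = crit k l b := ⟨_, rfl⟩
  have h0 : 1 ≤ a := by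
    rw [ha]
    unfold crit
    have := Nat.div_pos (Nat.le_of_dvd hb d1) (by omega)
    exact Nat.mul_pos (by omega) this
  have hak : a ≤ k * b := ha ▸ crit_le hl hlk.le
  rw [← ha] at m1 hdl ⊢
  have m2 := mul_crit (k := k) (dvd_facts (l := k - l) (by omega) (by omega) hdl)
  have e0 : k - (k - l) + 1 = l + 1 := by omega
  have hka : k ^ (i + 1) * a ≤ n := (Nat.mul_le_mul_left _ hak).trans n1
  obtain ⟨u, hu⟩ : ∃ u, k - l = u := ⟨_, rfl⟩
  have hu0 : 0 < u := by omega
  have hul : 0 < u * l := Nat.mul_pos hu0 hl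
  rw [← raise_const]
  refine h b (crit k (k - l) a) a n _ ?_ ?_ ?_ m2.le ?_ (by positivity) (h' a n h0 hdl hka)
  · exact Nat.le_of_dvd hb (dvd_facts (by omega) (by omega) hdvd)
  · rw [e0] at m2
    rw [hu] at m1 m2 ⊢
    refine le_of_mul_le_mul_left ?_ hul
    calc u * l * b ≤ (l + 1) * ((u + 1) * b) := by nlinarith
      _ = l * (u * crit k u a) := by rw [m2, ← m1]; ring
      _ = u * l * crit k u a := by ring
  · rw [e0] at m2
    rw [hu] at m1 m2 ⊢
    refine le_of_mul_le_mul_left ?_ hul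
    have e3 : l + 1 ≤ 2 * l := by omega
    have e4 : u + 1 ≤ 2 * u := by omega
    calc u * l * crit k u a = (l + 1) * ((u + 1) * b) := by
          rw [← m1]
          calc _ = l * (u * crit k u a) := by ring
            _ = _ := by rw [m2]; ring
      _ ≤ (2 * l) * ((2 * u) * b) := Nat.mul_le_mul e3 (Nat.mul_le_mul_right _ e4)
      _ = _ := by ring
  · refine (crit_le (by omega) (by omega)).trans (le_trans ?_ hka)
    exact Nat.mul_le_mul_right _ (Nat.le_self_pow (by omega) _)

/-- The recursion for the gains, from Hölder's inequality. -/
lemma Gain_step {k l i : ℕ} (hl : 1 ≤ l) (hlk : l < k) (hkp : k < p) {η x x' : ℝ}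
    (hAd : Adm p k η) (hA : ∀ m, 1 ≤ m → m < k → Adm p m 0)
    (hG : 2 ≤ l → Gain p k η i (l - 1) x) (hx : l = 1 → x = η)
    (hG' : Gain p k η i (k - l) x') :
    Gain p k η (i + 1) l (((k : ℝ) - l) / (k - l + 1) * x + x' / l) := by
  intro ε hε
  have hp0 := p_pos p
  have hlr : (0 : ℝ) < l := by exact_mod_cast hl
  have hkl : (l : ℝ) < k := by exact_mod_cast hlk
  have hd : (0 : ℝ) < (k : ℝ) - l + 1 := by linarith
  have first : ∃ C : ℝ, 1 ≤ C ∧ ∀ b n : ℕ, 1 ≤ b → k.factorial ^ (i + 2) ∣ b →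
      k ^ (i + 2) * b ≤ n →
      Bil p k (l - 1) (crit k l b) b n (C * (p : ℝ) ^ ((η + ε) * n - x * b)) := by
    rcases Nat.lt_or_ge l 2 with h | h
    · have h1 : l = 1 := by omega
      obtain ⟨C, hC, hB⟩ := Bil_zero p (k := k) (by omega) hAd hε
      refine ⟨C, hC, fun b n hb hdvd hn => ?_⟩
      obtain ⟨n1, n2, n3, n4⟩ := pow_facts (by omega) hn
      rw [hx h1]
      have := hB (crit k l b) b n ((crit_le hl hlk.le).trans n3) n4
      subst h1
      exact this
    · exact Gain_first p h hlk hkp (hA _ (by omega) (by omega)) (hG h) hε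
  obtain ⟨C, hC, h1⟩ := first
  obtain ⟨C', hC', h2⟩ := Gain_second p hl hlk hkp (hA (k - l) (by omega) (by omega)) hG' hε
  obtain ⟨θ, hθ⟩ : ∃ θ : ℝ, θ = 1 / ((k : ℝ) - l + 1) := ⟨_, rfl⟩
  have hθ0 : 0 ≤ θ := by rw [hθ]; positivity
  have hθ1 : θ ≤ 1 := by rw [hθ, div_le_one hd]; linarith
  refine ⟨C ^ (1 - θ) * C' ^ θ, one_le_mul_of_one_le_of_one_le
    (Real.one_le_rpow hC (by linarith)) (Real.one_le_rpow hC' hθ0), fun b n hb hdvd hn => ?_⟩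
  have h3 := Bil_holder p hl hlk.le (by positivity) (by positivity) (h1 b n hb hdvd hn)
    (h2 b n hb hdvd hn)
  refine h3.mono p (le_of_eq ?_)
  rw [← hθ, Real.mul_rpow (by positivity) (by positivity),
    Real.mul_rpow (by positivity) (by positivity), ← Real.rpow_mul hp0.le, ← Real.rpow_mul hp0.le,
    mul_mul_mul_comm, ← Real.rpow_add hp0]
  congr 2
  have d1 : l ∣ b := dvd_facts hl hlk.le hdvd
  have m1 : (l : ℝ) * (crit k l b : ℕ) = ((k : ℝ) - l + 1) * b := by
    have := mul_crit (k := k) d1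
    have h4 : ((l * crit k l b : ℕ) : ℝ) = ((k - l + 1) * b : ℕ) := by rw [this]
    push_cast [Nat.cast_sub hlk.le] at h4
    exact h4
  have m2 : ((crit k l b : ℕ) : ℝ) = ((k : ℝ) - l + 1) * b / l := by
    rw [eq_div_iff hlr.ne', ← m1]; ring
  rw [m2, hθ]
  field_simp
  ring

/-- The gains obtained after `i` steps; the entry `l = 0` is the constant `η`. -/
noncomputable def gain (k : ℕ) (η : ℝ) : ℕ → ℕ → ℝ
  | _, 0 => η
  | 0, _ + 1 => 0
  | i + 1, l + 1 => ((k : ℝ) - (l + 1 : ℕ)) / (k - (l + 1 : ℕ) + 1) * gain k η i l +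
      gain k η i (k - (l + 1)) / (l + 1 : ℕ)

/-- The recursion for the gains conserves their sum, up to an inflow proportional to `η`. -/
lemma sum_gain (K : ℕ) (η : ℝ) (i : ℕ) :
    ∑ l ∈ Finset.range K, gain (K + 1) η i (l + 1) = i * (η * (K / (K + 1))) := by
  induction i with
  | zero => simp [gain]
  | succ i ih =>
    simp only [gain]
    rw [Finset.sum_add_distrib]
    have e1 : ∑ l ∈ Finset.range K, gain (K + 1) η i (K + 1 - (l + 1)) / ((l + 1 : ℕ) : ℝ) =
        ∑ l ∈ Finset.range K, gain (K + 1) η i (l + 1) / ((K : ℝ) - l) := by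
      rw [← Finset.sum_range_reflect]
      refine Finset.sum_congr rfl fun j hj => ?_
      rw [Finset.mem_range] at hj
      have h1 : K - 1 - j + 1 = K - j := by omega
      have h2 : K + 1 - (K - j) = j + 1 := by omega
      rw [h1, h2, Nat.cast_sub hj.le]
    obtain ⟨g, hg⟩ : ∃ g : ℕ → ℝ, ∀ l, g l = ((K : ℝ) - l) / (K - l + 1) * gain (K + 1) η i l :=
      ⟨_, fun _ => rfl⟩
    have e2 : ∑ l ∈ Finset.range K, (((K + 1 : ℕ) : ℝ) - ((l + 1 : ℕ) : ℝ)) /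
        (((K + 1 : ℕ) : ℝ) - ((l + 1 : ℕ) : ℝ) + 1) * gain (K + 1) η i l =
        ∑ l ∈ Finset.range (K + 1), g l := by
      rw [Finset.sum_range_succ, hg K, sub_self, zero_div, zero_mul, add_zero]
      refine Finset.sum_congr rfl fun l _ => ?_
      rw [hg]
      push_cast
      congr 2 <;> ring
    have e3 : g 0 = η * (K / (K + 1)) := by
      rw [hg]
      cases i <;> simp [gain] <;> ring
    rw [e1, e2, Finset.sum_range_succ', e3, add_right_comm, ← Finset.sum_add_distrib]
    have e4 : ∑ l ∈ Finset.range K, (g (l + 1) + gain (K + 1) η i (l + 1) / ((K : ℝ) - l)) =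
        ∑ l ∈ Finset.range K, gain (K + 1) η i (l + 1) := by
      refine Finset.sum_congr rfl fun l hl => ?_
      rw [Finset.mem_range] at hl
      have : (0 : ℝ) < (K : ℝ) - l := by
        have : (l : ℝ) < K := by exact_mod_cast hl
        linarith
      rw [hg]
      push_cast
      have h5 : (K : ℝ) - (l + 1) + 1 = K - l := by ring
      rw [h5]
      field_simp
      ring
    rw [e4, ih]
    push_cast
    ring

lemma Gain_all {k : ℕ} (hkp : k < p) {η : ℝ} (hη : 0 ≤ η) (hAd : Adm p k η)
    (hA : ∀ m, 1 ≤ m → m < k → Adm p m 0) :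
    ∀ i l, 1 ≤ l → l < k → Gain p k η i l (gain k η i l) := by
  intro i
  induction i with
  | zero =>
    intro l hl hlk
    obtain ⟨m, rfl⟩ := Nat.exists_eq_add_of_le' hl
    simpa [gain] using Gain_zero p hl hlk hη hAd
  | succ i ih =>
    intro l hl hlk
    obtain ⟨m, rfl⟩ := Nat.exists_eq_add_of_le' hl
    rw [gain]
    refine Gain_step p hl hlk hkp hAd hA (fun h => ?_) (fun h => ?_)
      (ih _ (by omega) (by omega))
    · rw [Nat.add_sub_cancel]
      exact ih m (by omega) (by omega)
    · have : m = 0 := by omega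
      subst this
      cases i <;> simp [gain]

/-- Some gain exceeds any prescribed bound after sufficiently many steps. -/
lemma exists_gain {k : ℕ} (hk : 2 ≤ k) {η : ℝ} (hη : 0 < η) (B : ℝ) :
    ∃ i l, 1 ≤ l ∧ l < k ∧ B ≤ gain k η i l := by
  obtain ⟨K, rfl⟩ := Nat.exists_eq_add_of_le' (show 1 ≤ k by omega)
  have hK : (0 : ℝ) < K := by exact_mod_cast (by omega : 0 < K)
  by_contra! hcon
  obtain ⟨i, hi⟩ := exists_nat_gt (K * B / (η * (K / (K + 1))))
  rw [div_lt_iff₀ (by positivity), ← sum_gain] at hi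
  have : ∑ l ∈ Finset.range K, gain (K + 1) η i (l + 1) ≤ ∑ l ∈ Finset.range K, B :=
    Finset.sum_le_sum fun l hl => (hcon i (l + 1) (by omega) (by
      rw [Finset.mem_range] at hl; omega)).le
  rw [Finset.sum_const, Finset.card_range, nsmul_eq_mul] at this
  linarith

end Scales2

/-! ### Conclusion of the induction on scales -/

section Conclusion

set_option linter.unusedSectionVars false

variable (p : ℕ) [hp : Fact p.Prime]

/-- A large gain turns into a power saving for the bilinear constant at the coarsest scale. -/
lemma Bil_saving {k l i : ℕ} (hl : 1 ≤ l) (hlk : l < k) {η x : ℝ} (hη : 0 < η)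
    (hx : (2 * tr k + 1) * (k + 1) + 1 ≤ x) (hG : Gain p k η i l x) :
    ∃ η' : ℝ, 0 < η' ∧ η' < η ∧ ∃ C : ℝ, 1 ≤ C ∧ ∀ n : ℕ, 1 ≤ n →
      Bil p k l 1 1 n (C * (p : ℝ) ^ (η' * n)) := by
  have hp1 := (one_lt_p p).le
  have hp0 := p_pos p
  have hk : 1 ≤ k := by omega
  obtain ⟨W, hW⟩ : ∃ W, W = k ^ (i + 1) := ⟨_, rfl⟩
  obtain ⟨L, hL⟩ : ∃ L, L = k.factorial ^ (i + 1) := ⟨_, rfl⟩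
  have hW1 : 1 ≤ W := hW ▸ Nat.one_le_pow _ _ (by omega)
  have hkW : k ≤ W := hW ▸ Nat.le_self_pow (by omega) _
  have hL1 : 1 ≤ L := hL ▸ Nat.one_le_pow _ _ (Nat.factorial_pos k)
  have hWr : (1 : ℝ) ≤ W := by exact_mod_cast hW1
  -- with `b` the largest multiple of `L` with `W b ≤ n`, one has `n ≤ 2 W b`, so a net saving of
  -- `p ^ b` is at least `p ^ (2 δ n)`; half of it pays for the error `p ^ (δ n)`
  obtain ⟨δ, hδ⟩ : ∃ δ : ℝ, δ = 1 / (4 * W) := ⟨_, rfl⟩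
  have hδ0 : 0 < δ := by rw [hδ]; positivity
  obtain ⟨σ, hσ⟩ : ∃ σ : ℝ, σ = min δ (η / 2) := ⟨_, rfl⟩
  have hσ0 : 0 < σ := hσ ▸ lt_min hδ0 (by linarith)
  have hσ1 : σ ≤ δ := hσ ▸ min_le_left _ _
  have hσ2 : σ ≤ η / 2 := hσ ▸ min_le_right _ _
  obtain ⟨C, hC, hB⟩ := hG δ hδ0
  have hη' : 0 < η - σ := by linarith
  refine ⟨η - σ, hη', by linarith, C + ((p : ℝ) ^ (W * L)) ^ tr k, ?_, fun n hn => ?_⟩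
  · have : 0 ≤ ((p : ℝ) ^ (W * L)) ^ tr k := by positivity
    linarith
  have hpow1 : 1 ≤ (p : ℝ) ^ ((η - σ) * n) := Real.one_le_rpow hp1 (by positivity)
  rcases Nat.lt_or_ge n (W * L) with hsmall | hbig
  · have hD : Dec p k (n - 1) (((p : ℝ) ^ (W * L)) ^ tr k) :=
      (Dec_trivial p hk (n - 1)).mono p (by
        gcongr
        omega)
    refine (Bil_const p hk hlk.le hn hn (by positivity) hD hD).mono p ?_
    have : 0 ≤ ((p : ℝ) ^ (W * L)) ^ tr k := by positivity
    nlinarith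
  · obtain ⟨m, hm⟩ : ∃ m, m = n / (W * L) := ⟨_, rfl⟩
    have hWL : 0 < W * L := Nat.mul_pos hW1 hL1
    have hm1 : 1 ≤ m := hm ▸ Nat.div_pos hbig hWL
    obtain ⟨b, hb⟩ : ∃ b, b = L * m := ⟨_, rfl⟩
    have hWb : W * b ≤ n := by
      rw [hb, ← mul_assoc, hm]; exact Nat.mul_div_le _ _
    have hb1 : 1 ≤ b := hb ▸ Nat.mul_pos hL1 hm1
    have hnb : n ≤ 2 * (W * b) := by
      have h1 : n < W * L * (m + 1) := by rw [hm]; exact Nat.lt_mul_div_succ n hWL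
      have h2 : W * L ≤ W * L * m := Nat.le_mul_of_pos_right _ hm1
      rw [hb]
      nlinarith
    have hbn : b ≤ n := (Nat.le_mul_of_pos_left _ hW1).trans hWb
    have hcb : crit k l b ≤ k * b := crit_le hl hlk.le
    have hcn : crit k l b ≤ n := hcb.trans ((Nat.mul_le_mul_right _ hkW).trans hWb)
    have h1 := Bil_unit p hl hlk hcn hbn (by positivity)
      (hB b n hb1 (by rw [hb, hL]; exact Dvd.intro _ rfl) (by rw [← hW]; exact hWb))
    refine h1.mono p ?_
    have hbr : (n : ℝ) ≤ 2 * (W * b) := by exact_mod_cast hnb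
    have hδb : 2 * δ * n ≤ b := by
      have : 2 * δ * (2 * (W * b)) = b := by
        rw [hδ]; field_simp; norm_num
      rw [← this]
      exact mul_le_mul_of_nonneg_left hbr (by positivity)
    have hcr : ((crit k l b : ℕ) : ℝ) ≤ k * b := by exact_mod_cast hcb
    have hb0 : (0 : ℝ) ≤ b := by positivity
    have hn0 : (0 : ℝ) ≤ n := by positivity
    have hexp : (((2 * tr k + 1) * (crit k l b + b) : ℕ) : ℝ) + ((η + δ) * n - x * b) ≤
        (η - σ) * n := by
      push_cast
      have e1 : (2 * (tr k : ℝ) + 1) * ((crit k l b : ℕ) + b) ≤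
          (2 * (tr k : ℝ) + 1) * ((k + 1) * b) :=
        mul_le_mul_of_nonneg_left (by linarith) (by positivity)
      have e2 : ((2 * (tr k : ℝ) + 1) * (k + 1) + 1) * b ≤ x * b :=
        mul_le_mul_of_nonneg_right hx hb0
      have e3 : σ * n ≤ δ * n := mul_le_mul_of_nonneg_right hσ1 hn0
      nlinarith
    calc _ = C * (p : ℝ) ^ ((((2 * tr k + 1) * (crit k l b + b) : ℕ) : ℝ) +
          ((η + δ) * n - x * b)) := by
          rw [Real.rpow_add hp0, Real.rpow_natCast]; ring
      _ ≤ C * (p : ℝ) ^ ((η - σ) * n) := by gcongr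
      _ ≤ _ := by
          refine mul_le_mul_of_nonneg_right ?_ (by positivity)
          have : 0 ≤ ((p : ℝ) ^ (W * L)) ^ tr k := by positivity
          linarith

/-- A power saving at the coarsest scale propagates to linear decoupling. -/
lemma Adm_of_Bil {k l : ℕ} (hl : 1 ≤ l) (hlk : l < k) {η : ℝ} (hη : 0 < η) {C : ℝ} (hC : 1 ≤ C)
    (hB : ∀ n : ℕ, 1 ≤ n → Bil p k l 1 1 n (C * (p : ℝ) ^ (η * n))) : Adm p k η := by
  have hp1 := one_lt_p p
  have hp0 := p_pos p
  have hk : 1 ≤ k := by omega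
  have hT0 := tr_ne_zero hk
  have hTr : (0 : ℝ) < tr k := by exact_mod_cast one_le_tr hk
  obtain ⟨q, hq⟩ : ∃ q : ℝ, q = (p : ℝ) ^ (η / tr k) := ⟨_, rfl⟩
  have hq1 : 1 < q := hq ▸ Real.one_lt_rpow hp1 (by positivity)
  have hqn : ∀ n : ℕ, (q ^ n) ^ tr k = (p : ℝ) ^ (η * n) := by
    intro n
    rw [hq, ← Real.rpow_natCast, ← Real.rpow_natCast, ← Real.rpow_mul hp0.le,
      ← Real.rpow_mul hp0.le]
    congr 1
    field_simp
  obtain ⟨γ, hγ⟩ : ∃ γ : ℝ, γ = C ^ ((tr k : ℝ)⁻¹) := ⟨_, rfl⟩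
  have hγ0 : 0 < γ := hγ ▸ by positivity
  -- `α` absorbs the off-diagonal contribution of each scale into the growth from `n - 1` to `n`
  obtain ⟨α, hα⟩ : ∃ α : ℝ, α = 1 + (p : ℝ) ^ 2 * γ * q / (q - 1) := ⟨_, rfl⟩
  have hq' : 0 < q - 1 := by linarith
  have hα1 : 1 ≤ α := by
    rw [hα]
    have : 0 ≤ (p : ℝ) ^ 2 * γ * q / (q - 1) := by positivity
    linarith
  have hαq : α + (p : ℝ) ^ 2 * γ * q ≤ α * q := by
    have : (p : ℝ) ^ 2 * γ * q ≤ α * (q - 1) := by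
      rw [hα, add_mul, div_mul_cancel₀ _ hq'.ne']
      linarith
    linarith
  have key : ∀ n : ℕ, Dec p k n ((α * q ^ n) ^ tr k) := by
    intro n
    induction n with
    | zero =>
      refine (Dec_trivial p hk 0).mono p ?_
      gcongr
      simpa using hα1
    | succ n ih =>
      have h := Dec_step p hl hlk (n := n + 1) (by omega) (by positivity) (by positivity) ih
        (hB (n + 1) (by omega))
      refine h.mono p ?_
      rw [Real.pow_rpow_inv_natCast (by positivity) hT0, Real.mul_rpow (by positivity)
        (by positivity), ← hqn, Real.pow_rpow_inv_natCast (by positivity) hT0, ← hγ]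
      refine pow_le_pow_left₀ (by positivity) ?_ _
      calc _ = (α + (p : ℝ) ^ 2 * γ * q) * q ^ n := by rw [pow_succ]; ring
        _ ≤ α * q * q ^ n := by gcongr
        _ = _ := by rw [pow_succ]; ring
  intro ε hε
  refine ⟨α ^ tr k, one_le_pow₀ hα1, fun n => (key n).mono p ?_⟩
  rw [mul_pow, hqn]
  have : η * n ≤ (η + ε) * n := by
    have : (0 : ℝ) ≤ n := by positivity
    nlinarith
  gcongr
  exact hp1.le

/-- The full decoupling theorem in dimension `k < p`: the infimum of the admissible exponents
is itself admissible and, as every positive admissible exponent can be lowered, it vanishes. -/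
theorem Adm_zero : ∀ k : ℕ, 1 ≤ k → k < p → Adm p k 0 := by
  intro k
  induction k using Nat.strong_induction_on with
  | _ k ih =>
    intro hk hkp
    have hp1 := one_lt_p p
    have hp0 := p_pos p
    rcases Nat.lt_or_ge k 2 with h2 | h2
    · have : k = 1 := by omega
      subst this
      intro ε hε
      refine ⟨1, le_rfl, fun n => (Dec_one p n).mono p ?_⟩
      rw [one_mul]
      exact Real.one_le_rpow hp1.le (by positivity)
    obtain ⟨E, hE⟩ : ∃ E : Set ℝ, E = {η | 0 ≤ η ∧ Adm p k η} := ⟨_, rfl⟩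
    have hbdd : BddBelow E := ⟨0, fun η h => by rw [hE] at h; exact h.1⟩
    have hne : E.Nonempty := by
      refine ⟨tr k, ?_⟩
      rw [hE]
      refine ⟨by positivity, fun ε hε => ⟨1, le_rfl, fun n => (Dec_trivial p hk n).mono p ?_⟩⟩
      rw [one_mul, ← pow_mul, ← Real.rpow_natCast]
      have : (0 : ℝ) ≤ n := by positivity
      refine Real.rpow_le_rpow_of_exponent_le hp1.le ?_
      push_cast
      nlinarith
    have h0 : 0 ≤ sInf E := le_csInf hne fun η h => by rw [hE] at h; exact h.1
    have hadm : Adm p k (sInf E) := by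
      intro ε hε
      obtain ⟨η, hη, hlt⟩ := exists_lt_of_csInf_lt hne (show sInf E < sInf E + ε / 2 by linarith)
      rw [hE] at hη
      obtain ⟨C, hC, hD⟩ := hη.2 (ε / 2) (by linarith)
      refine ⟨C, hC, fun n => (hD n).mono p ?_⟩
      have : (0 : ℝ) ≤ n := by positivity
      have : (η + ε / 2) * n ≤ (sInf E + ε) * n := by nlinarith
      gcongr
      exact hp1.le
    rcases h0.eq_or_lt with h | hpos
    · rw [h]; exact hadm
    exfalso
    obtain ⟨i, l, hl, hlk, hx⟩ := exists_gain h2 hpos ((2 * tr k + 1) * (k + 1) + 1)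
    obtain ⟨η', h1, h3, C, hC, hB⟩ := Bil_saving p hl hlk hpos hx
      (Gain_all p hkp h0 hadm (fun m hm hmk => ih m hmk hm (by omega)) i l hl hlk)
    have h4 := Adm_of_Bil p hl hlk h1 hC hB
    have h5 : sInf E ≤ η' := csInf_le hbdd (by rw [hE]; exact ⟨h1.le, h4⟩)
    linarith

end Conclusion

/-! ### Counting solutions -/

section Counting

set_option linter.unusedSectionVars false

variable (p : ℕ) [hp : Fact p.Prime]

/-- Frequencies that are distinct modulo `p ^ n` make every term of the square function
equal to the number of frequencies in the class. -/
lemma sq_interval {k n N : ℕ} (hk : 1 ≤ k) (hN : N ≤ p ^ n) :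
    sq p k n (Finset.Icc 1 N) (fun i => (i : ℤ)) (fun _ => 1) = N := by
  have hcl : ∀ j : ZMod (p ^ n), Nm p k (k * n)
      (cl p n (Finset.Icc 1 N) (fun i => (i : ℤ)) j) (fun i => (i : ℤ)) (fun _ => 1) =
      ((cl p n (Finset.Icc 1 N) (fun i => (i : ℤ)) j).card : ℝ) := by
    intro j
    have h1 : (cl p n (Finset.Icc 1 N) (fun i => (i : ℤ)) j).card ≤ 1 := by
      rw [Finset.card_le_one]
      intro a ha b hb
      rw [Finset.mem_filter, Finset.mem_Icc] at ha hb
      have h := ha.2.trans hb.2.symm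
      rw [ZMod.intCast_eq_intCast_iff_dvd_sub] at h
      have hN' : (N : ℤ) ≤ (p ^ n : ℕ) := by exact_mod_cast hN
      have := Int.eq_zero_of_abs_lt_dvd h (by rw [abs_lt]; constructor <;> dsimp only <;> omega)
      dsimp only at this
      omega
    rcases Nat.le_one_iff_eq_zero_or_eq_one.1 h1 with h | h
    · rw [Finset.card_eq_zero] at h
      rw [h, Nm_empty p hk]; simp
    · rw [h]
      obtain ⟨a, ha⟩ := Finset.card_eq_one.1 h
      rw [ha]
      simp [Nm, nm, en, es, norm_ph, avg_const]
  unfold sq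
  simp only [hcl]
  rw [← Nat.cast_sum]
  have := Finset.card_eq_sum_card_fiberwise (s := Finset.Icc 1 N)
    (f := fun i : ℕ => ((i : ℤ) : ZMod (p ^ n))) (t := Finset.univ) (by intro _ _; simp)
  rw [Nat.card_Icc] at this
  congr 1
  simpa [cl] using this.symm

lemma prod_ph {k M s : ℕ} (P : Ph p k M) (a : Fin s → ℕ) :
    ∏ i, ph P (a i : ℤ) =
      ZMod.stdAddChar (∑ j, P j * ∑ i, ((a i : ℕ) : ZMod (p ^ M)) ^ (j : ℕ)) := by
  simp only [ph, ← std_sum, Finset.mul_sum]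
  rw [Finset.sum_comm]
  simp

/-- By orthogonality the moment of order `2 s` of the exponential sum counts solutions modulo
`p ^ M`, among which are all the integer solutions. -/
lemma Jcount_le_avg (d s N M : ℕ) :
    (Jcount d s N 0 : ℝ) ≤
      avg fun P : Ph p d M => en (Finset.Icc 1 N) (fun i => (i : ℤ)) (fun _ => 1) P ^ s := by
  set A := Fintype.piFinset fun _ : Fin s => Finset.Icc 1 N with hA
  set v : (Fin s → ℕ) × (Fin s → ℕ) → Fin (d + 1) → ZMod (p ^ M) := fun ab j =>
    ∑ i, ((ab.1 i : ℕ) : ZMod (p ^ M)) ^ (j : ℕ) - ∑ i, ((ab.2 i : ℕ) : ZMod (p ^ M)) ^ (j : ℕ)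
    with hv
  have h1 : ∀ P : Ph p d M,
      ((en (Finset.Icc 1 N) (fun i => (i : ℤ)) (fun _ => 1) P ^ s : ℝ) : ℂ) =
      ∑ ab ∈ A ×ˢ A, ZMod.stdAddChar (∑ j, P j * v ab j) := by
    intro P
    have e : es (Finset.Icc 1 N) (fun i => (i : ℤ)) (fun _ => 1) P ^ s =
        ∑ a ∈ A, ∏ i, ph P (a i : ℤ) := by
      unfold es
      rw [← Fin.prod_const, Finset.prod_univ_sum]
      simp [hA]
    have e2 : ((en (Finset.Icc 1 N) (fun i => (i : ℤ)) (fun _ => 1) P ^ s : ℝ) : ℂ) =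
        es (Finset.Icc 1 N) (fun i => (i : ℤ)) (fun _ => 1) P ^ s *
          (starRingEnd ℂ) (es (Finset.Icc 1 N) (fun i => (i : ℤ)) (fun _ => 1) P ^ s) := by
      rw [Complex.mul_conj, Complex.normSq_eq_norm_sq, norm_pow]
      unfold en
      push_cast
      ring
    rw [e2, e, map_sum, Finset.sum_mul_sum, Finset.sum_product]
    refine Finset.sum_congr rfl fun a _ => Finset.sum_congr rfl fun b _ => ?_
    rw [prod_ph, prod_ph, ← AddChar.map_neg_eq_conj, ← AddChar.map_add_eq_mul]
    congr 1
    simp only [hv, mul_sub, Finset.sum_sub_distrib]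
    ring
  have hc : (0 : ℝ) < Fintype.card (Ph p d M) := by exact_mod_cast Fintype.card_pos
  have h2 : (∑ P : Ph p d M, en (Finset.Icc 1 N) (fun i => (i : ℤ)) (fun _ => 1) P ^ s) =
      ((A ×ˢ A).filter fun ab => v ab = 0).card * (Fintype.card (Ph p d M) : ℝ) := by
    have : ((∑ P : Ph p d M, en (Finset.Icc 1 N) (fun i => (i : ℤ)) (fun _ => 1) P ^ s : ℝ) : ℂ) =
      ((((A ×ˢ A).filter fun ab => v ab = 0).card * (Fintype.card (Ph p d M) : ℝ) : ℝ) : ℂ) := by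
      rw [Complex.ofReal_sum]
      simp only [h1]
      rw [Finset.sum_comm]
      simp only [sum_std_eq]
      rw [← Finset.sum_filter]
      simp
    exact_mod_cast this
  unfold avg
  rw [h2, mul_comm, mul_assoc, mul_inv_cancel₀ hc.ne', mul_one]
  unfold Jcount
  refine Nat.cast_le.2 (Finset.card_le_card ?_)
  intro ab hab
  rw [Finset.mem_filter] at hab ⊢
  refine ⟨hab.1, ?_⟩
  funext j
  simp only [hv, Pi.zero_apply, sub_eq_zero]
  refine Fin.cases (by simp) (fun ν => ?_) j
  have := congrArg (Int.cast : ℤ → ZMod (p ^ M)) (hab.2 ν)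
  simpa using this

lemma en_interval_le {k M : ℕ} (N : ℕ) (P : Ph p k M) :
    en (Finset.Icc 1 N) (fun i => (i : ℤ)) (fun _ => 1) P ≤ (N : ℝ) ^ 2 := by
  unfold en es
  refine pow_le_pow_left₀ (norm_nonneg _) ?_ 2
  refine (norm_sum_le _ _).trans (le_of_eq ?_)
  simp [norm_ph]

/-- The moment of critical order `2 tr k` of the exponential sum over an interval. -/
lemma avg_interval_le {k n N : ℕ} (hk : 1 ≤ k) (hN : N ≤ p ^ n) {C : ℝ} (hD : Dec p k n C) :
    (avg fun P : Ph p k (k * n) =>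
      en (Finset.Icc 1 N) (fun i => (i : ℤ)) (fun _ => 1) P ^ tr k) ≤ C * (N : ℝ) ^ tr k := by
  have := hD (Finset.Icc 1 N) (fun i => (i : ℤ)) (fun _ => 1)
  rwa [sq_interval p hk hN] at this

end Counting

end VMVT

open VMVT in
/-- The Vinogradov mean value theorem in its optimal form (Bourgain–Demeter–Guth, Wooley):
for integers `d ≥ 2`, `s ≥ 1` and every `ε > 0` there is `C = C(d,s,ε) > 0` with
`J_{d,s}(N) ≤ C (N^s + N^{2s - d(d+1)/2}) N^ε` for all `N ≥ 1`. -/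
theorem stmt_6 (d s : ℕ) (hd : 2 ≤ d) (hs : 1 ≤ s) (ε : ℝ) (hε : 0 < ε) :
    ∃ C : ℝ, 0 < C ∧ ∀ N : ℕ, 0 < N →
      (Jcount d s N 0 : ℝ) ≤
        C * ((N : ℝ) ^ (s : ℝ) +
            (N : ℝ) ^ ((2 * s : ℝ) - (d : ℝ) * ((d : ℝ) + 1) / 2)) * (N : ℝ) ^ ε := by
  obtain ⟨p, hpd, hp⟩ := Nat.exists_infinite_primes (d + 1)
  have : Fact p.Prime := ⟨hp⟩
  obtain ⟨C, hC, hD⟩ := Adm_zero p d (by omega) (by omega) ε hε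
  have hT : 1 ≤ tr d := one_le_tr (by omega)
  have hp1 : (1 : ℝ) ≤ p := by exact_mod_cast hp.one_lt.le
  have hK : 1 ≤ C * (p : ℝ) ^ ε := by
    have := Real.one_le_rpow hp1 hε.le
    nlinarith
  refine ⟨C * (p : ℝ) ^ ε, by positivity, fun N hN => ?_⟩
  have hN1 : (1 : ℝ) ≤ N := by exact_mod_cast hN
  have hNε : 1 ≤ (N : ℝ) ^ ε := Real.one_le_rpow hN1 hε.le
  -- the scale `p ^ n` is comparable to `N`
  obtain ⟨n, hn1, hn2⟩ : ∃ n, N ≤ p ^ n ∧ p ^ n ≤ p * N := by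
    rcases Nat.lt_or_ge 1 N with h | h
    · refine ⟨Nat.clog p N, Nat.le_pow_clog hp.one_lt N, ?_⟩
      have h1 := Nat.pow_pred_clog_lt_self hp.one_lt h
      have h2 : 0 < Nat.clog p N := Nat.clog_pos hp.one_lt h
      obtain ⟨m, hm⟩ := Nat.exists_eq_succ_of_ne_zero h2.ne'
      rw [hm] at h1 ⊢
      rw [Nat.pow_succ, mul_comm]
      exact Nat.mul_le_mul_left _ h1.le
    · exact ⟨0, by simpa using h, Nat.mul_pos hp.pos hN⟩
  set K := C * (p : ℝ) ^ ε * (N : ℝ) ^ ε with hKdef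
  have hK1 : 1 ≤ K := by nlinarith
  have hDK : Dec p d n K := by
    refine (hD n).mono p ?_
    rw [hKdef, mul_assoc, zero_add, mul_comm ε, Real.rpow_mul (by positivity), Real.rpow_natCast,
      ← Real.mul_rpow (by positivity) (by positivity)]
    refine mul_le_mul_of_nonneg_left (Real.rpow_le_rpow (by positivity) ?_ hε.le) (by linarith)
    exact_mod_cast hn2
  have hmain := avg_interval_le p (by omega) hn1 hDK
  have hJ := Jcount_le_avg p d s N (d * n)
  set F : Ph p d (d * n) → ℝ := en (Finset.Icc 1 N) (fun i => (i : ℤ)) (fun _ => 1) with hF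
  have hF0 : ∀ P, 0 ≤ F P := en_nonneg _ _ _
  suffices h : (avg fun P => F P ^ s) ≤ K * ((N : ℝ) ^ (s : ℝ) +
      (N : ℝ) ^ ((2 * s : ℝ) - (d : ℝ) * ((d : ℝ) + 1) / 2)) by
    refine hJ.trans (h.trans (le_of_eq ?_))
    rw [hKdef]; ring
  rcases le_total s (tr d) with hst | hst
  · calc (avg fun P => F P ^ s) ≤ (avg fun P => F P ^ tr d) ^ ((s : ℝ) / tr d) :=
          avg_pow_le hF0 hT hst
      _ ≤ (K * (N : ℝ) ^ tr d) ^ ((s : ℝ) / tr d) :=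
          Real.rpow_le_rpow (avg_nonneg fun P => pow_nonneg (hF0 P) _) hmain (by positivity)
      _ = K ^ ((s : ℝ) / tr d) * (N : ℝ) ^ (s : ℝ) := by
          have : (tr d : ℝ) ≠ 0 := by positivity
          rw [Real.mul_rpow (by positivity) (by positivity), ← Real.rpow_natCast (N : ℝ) (tr d),
            ← Real.rpow_mul (by positivity), mul_div_cancel₀ _ this]
      _ ≤ K * (N : ℝ) ^ (s : ℝ) := by
          refine mul_le_mul_of_nonneg_right ?_ (by positivity)
          have h1 : (s : ℝ) / tr d ≤ 1 :=
            div_le_one_of_le₀ (by exact_mod_cast hst) (by positivity)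
          exact (Real.rpow_le_rpow_of_exponent_le hK1 h1).trans_eq (Real.rpow_one K)
      _ ≤ _ := mul_le_mul_of_nonneg_left (le_add_of_nonneg_right (by positivity)) (by linarith)
  · obtain ⟨r, rfl⟩ := Nat.exists_eq_add_of_le hst
    calc (avg fun P => F P ^ (tr d + r))
        ≤ avg fun P => ((N : ℝ) ^ 2) ^ r * F P ^ tr d := by
          refine avg_mono fun P => ?_
          rw [pow_add, mul_comm]
          exact mul_le_mul_of_nonneg_right
            (pow_le_pow_left₀ (hF0 P) (en_interval_le p N P) r) (pow_nonneg (hF0 P) _)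
      _ ≤ ((N : ℝ) ^ 2) ^ r * (K * (N : ℝ) ^ tr d) := by
          rw [avg_mul_left]
          exact mul_le_mul_of_nonneg_left hmain (by positivity)
      _ = K * (N : ℝ) ^ ((2 * (tr d + r : ℕ) : ℝ) - (d : ℝ) * ((d : ℝ) + 1) / 2) := by
          have e : (2 * (tr d + r : ℕ) : ℝ) - (d : ℝ) * ((d : ℝ) + 1) / 2 =
              ((2 * r + tr d : ℕ) : ℝ) := by
            rw [← tr_cast]; push_cast; ring
          rw [e, Real.rpow_natCast]
          ring
      _ ≤ _ := mul_le_mul_of_nonneg_left (le_add_of_nonneg_left (by positivity)) (by linarith)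
end

section
/- Let d ≥ 2, let k be an integer with 1 ≤ k ≤ d, let s ≥ 1 be an integer, p a prime, and N a positive integer with s·N^k < p. Then R_{d,s}(N) ≤ Σ J_{d,s}(N; (0,…,0, p·m_{k+1},…, p·m_d)), where the sum runs over all integer vectors (m_{k+1},…,m_d) with |m_j| ≤ s·N^j/p for j = k+1,…,d (with the first k coordinates of the shift vector equal to 0). -/
/-- `R_{d,s}(N; h)`: the number of `2s`-tuples of integers `1 ≤ n_1, …, n_{2s} ≤ N`
(written here as a pair of `s`-tuples) with
`n_1^ν + ⋯ + n_s^ν ≡ n_{s+1}^ν + ⋯ + n_{2s}^ν + h_ν (mod p)` for all `ν = 1, …, d`. -/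
def Rcount (p d s N : ℕ) (h : Fin d → ZMod p) : ℕ :=
  (((Fintype.piFinset fun _ : Fin s => Finset.Icc 1 N) ×ˢ
      (Fintype.piFinset fun _ : Fin s => Finset.Icc 1 N)).filter
    fun nm => ∀ ν : Fin d,
      (∑ i, (nm.1 i : ZMod p) ^ ((ν : ℕ) + 1)) =
        (∑ i, (nm.2 i : ZMod p) ^ ((ν : ℕ) + 1)) + h ν).card

lemma sum_pow_le {s N : ℕ} {n : Fin s → ℕ} (hn : ∀ i, n i ≤ N) (j : ℕ) :
    ∑ i, n i ^ j ≤ s * N ^ j := by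
  calc ∑ i, n i ^ j ≤ ∑ _i : Fin s, N ^ j :=
        Finset.sum_le_sum fun i _ => Nat.pow_le_pow_left (hn i) j
    _ = s * N ^ j := by simp

/-- If `a, b ∈ [0, B]` and `a - b = p m`, then `m` lies between `-⌊B / p⌋` and `⌊B / p⌋`. -/
lemma quotient_mem_Icc {p a b B : ℕ} (hp : 0 < p) (ha : a ≤ B) (hb : b ≤ B) {m : ℤ}
    (h : (a : ℤ) - b = p * m) : m ∈ Finset.Icc (-((B / p : ℕ) : ℤ)) ((B / p : ℕ) : ℤ) := by
  have hp' : (0 : ℤ) < p := by exact_mod_cast hp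
  rw [Finset.mem_Icc, Int.natCast_div, neg_le, Int.le_ediv_iff_mul_le hp',
    Int.le_ediv_iff_mul_le hp']
  constructor <;> nlinarith

/-- Inequality (3.2): if `s N^k < p` then
`R_{d,s}(N) ≤ Σ J_{d,s}(N; (0, …, 0, p m_{k+1}, …, p m_d))`, the sum running over all
integer vectors `(m_{k+1}, …, m_d)` with `|m_j| ≤ s N^j / p` for `j = k+1, …, d`
(here the `j`-th coordinate of the shift has one-based index `j = (jL : ℕ) + 1`). -/
theorem stmt_16 (d k s : ℕ) (hd : 2 ≤ d) (hk1 : 1 ≤ k) (hkd : k ≤ d) (hs : 1 ≤ s)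
    (p : ℕ) (hp : p.Prime) (N : ℕ) (hN : 0 < N) (hNk : s * N ^ k < p) :
    Rcount p d s N 0 ≤
      ∑ m ∈ Fintype.piFinset (fun jL : Fin d =>
          Finset.Icc
            (-(if (jL : ℕ) + 1 ≤ k then 0 else ((s * N ^ ((jL : ℕ) + 1) / p : ℕ) : ℤ)))
            (if (jL : ℕ) + 1 ≤ k then 0 else ((s * N ^ ((jL : ℕ) + 1) / p : ℕ) : ℤ))),
        Jcount d s N fun jL => (p : ℤ) * m jL := by
  have bound : ∀ ν : Fin d, (if (ν : ℕ) + 1 ≤ k then (0 : ℤ) else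
      ((s * N ^ ((ν : ℕ) + 1) / p : ℕ) : ℤ)) = ((s * N ^ ((ν : ℕ) + 1) / p : ℕ) : ℤ) := by
    intro ν
    split_ifs with h
    · have : s * N ^ ((ν : ℕ) + 1) < p :=
        (Nat.mul_le_mul_left s (Nat.pow_le_pow_right hN h)).trans_lt hNk
      rw [Nat.div_eq_of_lt this, Nat.cast_zero]
    · rfl
  simp only [bound]
  refine (Finset.card_le_card ?_).trans Finset.card_biUnion_le
  rintro ⟨a, b⟩ hab
  obtain ⟨hmem, heq⟩ := Finset.mem_filter.mp hab
  have hdvd : ∀ ν : Fin d, (p : ℤ) ∣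
      ((∑ i, a i ^ ((ν : ℕ) + 1) : ℕ) : ℤ) - ((∑ i, b i ^ ((ν : ℕ) + 1) : ℕ) : ℤ) := by
    intro ν
    rw [← CharP.intCast_eq_zero_iff (ZMod p) p, Int.cast_sub, sub_eq_zero]
    simpa using heq ν
  choose m hm using hdvd
  have hle := Finset.mem_product.mp hmem
  simp only [Fintype.mem_piFinset, Finset.mem_Icc] at hle
  refine Finset.mem_biUnion.mpr ⟨m, Fintype.mem_piFinset.mpr fun ν => ?_,
    Finset.mem_filter.mpr ⟨hmem, fun ν => ?_⟩⟩
  · exact quotient_mem_Icc hp.pos (sum_pow_le (fun i => (hle.1 i).2) _)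
      (sum_pow_le (fun i => (hle.2 i).2) _) (hm ν)
  · have := hm ν
    push_cast at this
    linarith
end

section
/- Let F : R → R be the Fejér-type function F(x) = (sin(πx)/(πx))² for x ≠ 0 and F(0) = 1. Then for every positive integer H and every real number γ, one has the identity Σ_{a ∈ Z} F(a/H) · e(γ a) = H · Σ_{n ∈ Z} max(0, 1 − H·|n − γ|), where e(z) = exp(2πiz); in particular the left-hand side vanishes unless the distance from γ to the nearest integer is at most 1/H. -/
/-!
The identity is Poisson summation applied to the rescaled triangle function
`x ↦ H · max(0, 1 - H|x|)`, which is continuous with compact support. Its Fourier transform at `a`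
is `F(a/H)`: after rescaling (`fourier_scaled_triangle`) this is `𝓕 (max(0, 1 - |x|)) = F`
(`fourier_triangle`), which by evenness reduces to the elementary integral
`∫₀¹ 2(1 - y) cos(2πyt) dy = (1 - cos 2πt) / (2π²t²) = (sin πt / πt)²`.
The bound `F(a/H) ≤ (H/a)²` for `a ≠ 0` makes the Fourier coefficients summable. If every integer
is further than `1/H` from `γ`, each term of the triangle side is zero.
-/

/-- The Fejér-type function `F(x) = (sin(πx)/(πx))²` for `x ≠ 0`, with `F(0) = 1`. -/
noncomputable def Fejer (x : ℝ) : ℝ :=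
  if x = 0 then 1 else (Real.sin (Real.pi * x) / (Real.pi * x)) ^ 2

open scoped FourierTransform
open MeasureTheory

/-- The triangle function `max(0, 1 - |x|)`, with values in `ℂ`. -/
noncomputable def triangle (x : ℝ) : ℂ := ((max 0 (1 - |x|) : ℝ) : ℂ)

lemma continuous_triangle : Continuous triangle := by
  unfold triangle; fun_prop

lemma triangle_eq_zero {x : ℝ} (hx : 1 ≤ |x|) : triangle x = 0 := by
  simp [triangle, hx]

lemma triangle_neg (x : ℝ) : triangle (-x) = triangle x := by simp [triangle]

lemma integral_triangle_cos (t : ℝ) :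
    ∫ y in (0 : ℝ)..1, 2 * (1 - y) * Real.cos (2 * Real.pi * y * t) = Fejer t := by
  unfold Fejer
  split_ifs with ht
  · subst ht
    have h : ∀ y ∈ Set.uIcc (0 : ℝ) 1, HasDerivAt (fun y : ℝ => 2 * y - y ^ 2)
        (2 * (1 - y) * Real.cos (2 * Real.pi * y * 0)) y := by
      intro y _
      have := ((hasDerivAt_id y).const_mul 2).sub ((hasDerivAt_id y).pow 2)
      convert! this using 1
      simp
      ring
    rw [intervalIntegral.integral_eq_sub_of_hasDerivAt h
      (Continuous.intervalIntegrable (by fun_prop) _ _)]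
    norm_num
  · have hpi := Real.pi_ne_zero
    have h : ∀ y ∈ Set.uIcc (0 : ℝ) 1, HasDerivAt
        (fun y : ℝ => (1 - y) * (Real.sin (2 * Real.pi * y * t) / (Real.pi * t)) -
          Real.cos (2 * Real.pi * y * t) / (2 * Real.pi ^ 2 * t ^ 2))
        (2 * (1 - y) * Real.cos (2 * Real.pi * y * t)) y := by
      intro y _
      have h0 : HasDerivAt (fun y : ℝ => 2 * Real.pi * y * t) (2 * Real.pi * t) y := by
        simpa using ((hasDerivAt_id y).const_mul (2 * Real.pi)).mul_const t
      have h1 : HasDerivAt (fun y : ℝ => 1 - y) (-1) y := by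
        simpa using (hasDerivAt_id y).const_sub 1
      convert! (h1.mul (h0.sin.div_const (Real.pi * t))).sub
        (h0.cos.div_const (2 * Real.pi ^ 2 * t ^ 2)) using 1
      field_simp
      ring
    rw [intervalIntegral.integral_eq_sub_of_hasDerivAt h
      (Continuous.intervalIntegrable (by fun_prop) _ _)]
    have hc : Real.cos (2 * Real.pi * 1 * t) = 1 - 2 * Real.sin (Real.pi * t) ^ 2 := by
      rw [show 2 * Real.pi * 1 * t = 2 * (Real.pi * t) by ring, Real.cos_two_mul,
        Real.cos_sq']
      ring
    rw [hc]
    simp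
    field_simp
    ring

lemma fourier_triangle (t : ℝ) : 𝓕 triangle t = (Fejer t : ℂ) := by
  rw [Real.fourier_real_eq_integral_exp_smul]
  set g : ℝ → ℂ := fun v => Complex.exp (↑(-2 * Real.pi * v * t) * Complex.I) • triangle v with hg
  have hgc : Continuous g := by
    have := continuous_triangle
    fun_prop
  have hi : ∀ a b, IntervalIntegrable g volume a b := fun a b => hgc.intervalIntegrable a b
  have hgn : Continuous fun x => g (-x) := hgc.comp continuous_neg
  have h1 : ∫ v, g v = ∫ v in (-1 : ℝ)..1, g v := by
    rw [intervalIntegral.integral_of_le (by norm_num)]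
    refine (setIntegral_eq_integral_of_forall_compl_eq_zero fun x hx => ?_).symm
    have : 1 ≤ |x| := by
      by_contra! hlt
      exact hx ⟨(abs_lt.1 hlt).1, (abs_lt.1 hlt).2.le⟩
    simp [hg, triangle_eq_zero this]
  have h2 : ∫ v in (-1 : ℝ)..0, g v = ∫ v in (0 : ℝ)..1, g (-v) := by
    rw [intervalIntegral.integral_comp_neg]; simp
  rw [h1, ← intervalIntegral.integral_add_adjacent_intervals (hi (-1) 0) (hi 0 1), h2,
    ← intervalIntegral.integral_add (hgn.intervalIntegrable _ _) (hi 0 1),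
    ← integral_triangle_cos, ← intervalIntegral.integral_ofReal]
  refine intervalIntegral.integral_congr fun y hy => ?_
  rw [Set.uIcc_of_le zero_le_one] at hy
  have ht : triangle y = 1 - (y : ℂ) := by
    rw [triangle, abs_of_nonneg hy.1, max_eq_right (by linarith [hy.2])]
    push_cast; rfl
  simp only [hg, triangle_neg, ht, smul_eq_mul]
  push_cast
  have := Complex.two_cos (2 * Real.pi * y * t : ℂ)
  rw [show (2 : ℂ) * (1 - y) * Complex.cos (2 * Real.pi * y * t) =
    (1 - y) * (2 * Complex.cos (2 * Real.pi * y * t)) by ring, this]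
  ring_nf

lemma fourier_scaled_triangle {c : ℝ} (hc : 0 < c) (t : ℝ) :
    𝓕 (fun x : ℝ => (c : ℂ) * triangle (c * x)) t = (Fejer (t / c) : ℂ) := by
  rw [← fourier_triangle, Real.fourier_real_eq_integral_exp_smul,
    Real.fourier_real_eq_integral_exp_smul]
  have h := Measure.integral_comp_mul_left
    (fun v : ℝ => Complex.exp (↑(-2 * Real.pi * v * (t / c)) * Complex.I) • triangle v) c
  have hc' : (c : ℂ) ≠ 0 := by exact_mod_cast hc.ne'
  rw [abs_of_pos (inv_pos.2 hc), Complex.real_smul, Complex.ofReal_inv,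
    eq_inv_mul_iff_mul_eq₀ hc', ← integral_const_mul] at h
  rw [← h]
  congr 1
  ext v
  rw [show -2 * Real.pi * (c * v) * (t / c) = -2 * Real.pi * v * t by field_simp]
  simp only [smul_eq_mul]
  ring

lemma summable_fejer {c : ℝ} (hc : 0 < c) :
    Summable fun a : ℤ => (Fejer ((a : ℝ) / c) : ℂ) := by
  have hs : Summable fun a : ℤ => c ^ 2 * (1 / (a : ℝ) ^ 2) :=
    (Real.summable_one_div_int_pow.2 one_lt_two).mul_left _
  refine Summable.of_norm_bounded_eventually hs ?_
  refine (Set.finite_singleton (0 : ℤ)).subset fun a ha => ?_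
  by_contra h0
  refine ha ?_
  have ha0 : (a : ℝ) ≠ 0 := by exact_mod_cast h0
  change ‖(Fejer ((a : ℝ) / c) : ℂ)‖ ≤ c ^ 2 * (1 / (a : ℝ) ^ 2)
  rw [Complex.norm_real, Fejer, if_neg (div_ne_zero ha0 hc.ne'), norm_pow, Real.norm_eq_abs,
    sq_abs, div_pow]
  have hpi : 1 ≤ Real.pi ^ 2 := by nlinarith [Real.pi_gt_three]
  have ha2 : 0 < (a : ℝ) ^ 2 := by positivity
  calc _ ≤ 1 / (Real.pi * (a / c)) ^ 2 := by gcongr; exact Real.sin_sq_le_one _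
    _ = (c ^ 2 * (1 / (a : ℝ) ^ 2)) / Real.pi ^ 2 := by field_simp
    _ ≤ _ := div_le_self (by positivity) hpi

lemma poisson_triangle {c : ℝ} (hc : 0 < c) (γ : ℝ) :
    ∑' n : ℤ, (c : ℂ) * triangle (c * (γ + n)) =
      ∑' a : ℤ, (Fejer ((a : ℝ) / c) : ℂ) *
        Complex.exp (2 * Real.pi * Complex.I * (γ : ℂ) * (a : ℂ)) := by
  have hcont : Continuous fun x : ℝ => (c : ℂ) * triangle (c * x) :=
    continuous_const.mul (continuous_triangle.comp (continuous_const.mul continuous_id))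
  have hO : (fun x : ℝ => (c : ℂ) * triangle (c * x)) =O[Filter.cocompact ℝ]
      fun x : ℝ => |x| ^ (-2 : ℝ) := by
    refine Filter.EventuallyEq.trans_isBigO (f₂ := fun _ => (0 : ℂ)) ?_
      (Asymptotics.isBigO_zero _ _)
    filter_upwards [tendsto_norm_cocompact_atTop.eventually_ge_atTop c⁻¹] with x hx
    rw [triangle_eq_zero, mul_zero]
    rw [abs_mul, abs_of_pos hc, ← mul_inv_cancel₀ hc.ne']
    exact mul_le_mul_of_nonneg_left hx hc.le
  have h := Real.tsum_eq_tsum_fourier_of_rpow_decay_of_summable hcont one_lt_two hO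
    (by simpa only [fourier_scaled_triangle hc] using summable_fejer hc) γ
  rw [h]
  refine tsum_congr fun a => ?_
  rw [fourier_scaled_triangle hc, fourier_coe_apply]
  congr 2
  push_cast
  ring

/-- Poisson summation for the Fejér kernel: for every positive integer `H` and real `γ`,
`Σ_{a ∈ ℤ} F(a/H) e(γa) = H Σ_{n ∈ ℤ} max(0, 1 - H|n - γ|)` (the Fourier transform of
`F` being `x ↦ max(0, 1 - |x|)`, scaled); in particular the left-hand side vanishes
unless the distance from `γ` to the nearest integer is at most `1/H`. -/
theorem stmt_18 (H : ℕ) (hH : 0 < H) (γ : ℝ) :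
    (∑' a : ℤ, (Fejer ((a : ℝ) / (H : ℝ)) : ℂ) *
        Complex.exp (2 * Real.pi * Complex.I * (γ : ℂ) * (a : ℂ))) =
      (H : ℂ) * ∑' n : ℤ, ((max 0 (1 - (H : ℝ) * |(n : ℝ) - γ|) : ℝ) : ℂ) ∧
    ((∀ n : ℤ, 1 / (H : ℝ) < |γ - (n : ℝ)|) →
      (∑' a : ℤ, (Fejer ((a : ℝ) / (H : ℝ)) : ℂ) *
          Complex.exp (2 * Real.pi * Complex.I * (γ : ℂ) * (a : ℂ))) = 0) := by
  have hc : (0 : ℝ) < H := by exact_mod_cast hH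
  have main : (∑' a : ℤ, (Fejer ((a : ℝ) / (H : ℝ)) : ℂ) *
        Complex.exp (2 * Real.pi * Complex.I * (γ : ℂ) * (a : ℂ))) =
      (H : ℂ) * ∑' n : ℤ, ((max 0 (1 - (H : ℝ) * |(n : ℝ) - γ|) : ℝ) : ℂ) := by
    -- The substitution `n ↦ -n` turns `|n - γ|` into `|γ + n|`.
    rw [← poisson_triangle hc, tsum_mul_left, Complex.ofReal_natCast,
      ← (Equiv.neg ℤ).tsum_eq fun n : ℤ => ((max 0 (1 - (H : ℝ) * |(n : ℝ) - γ|) : ℝ) : ℂ)]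
    congr 1
    refine tsum_congr fun n => ?_
    rw [triangle, abs_mul, abs_of_pos hc, ← abs_neg (γ + n), Equiv.neg_apply, Int.cast_neg,
      show -(γ + (n : ℝ)) = -n - γ by ring]
  refine ⟨main, fun h => ?_⟩
  rw [main]
  refine mul_eq_zero_of_right _ ((tsum_congr fun n => ?_).trans tsum_zero)
  have hn := h n
  rw [abs_sub_comm, div_lt_iff₀ hc] at hn
  rw [max_eq_left (by linarith), Complex.ofReal_zero]
end
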